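/- arXiv:1810.12871 — 13 statements merged into one kernel-verified Lean document; each statement's English description precedes it below -/
import Mathlib

section
/- Let n ≥ 2, let t, W, J, θ > 0, let d ∈ ℝ^n have strictly positive entries with d_0 = θ/n, and let a ∈ [0,1]^n have transmissivity ρ = ρ(a). Set γ = t/(n(W + Jρ)), P = n(⌊nρ⌋ + (nρ − ⌊nρ⌋)²) − n²ρ², and let P_1,…,P_{n−1} be the waterfilling allocation P_i = (1/γ)·max(T − 1/d_i, 0), where T ≥ 0 is chosen so that ∑_{i=1}^{n−1} P_i = P. Then the LMMSE satisfies m(n,t,W,J,d,a) ≥ 1/(n/θ + γ n² ρ²) + ∑_{i=1}^{n−1} 1/(1/d_i + γ P_i). -/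
/-- Discrete Fourier transform of a real vector `a ∈ ℝ^n`:
`â_j = ∑_{i=0}^{n-1} a_i e^{-2πi·ij/n}`. -/
noncomputable def dft {n : ℕ} (a : Fin n → ℝ) (j : Fin n) : ℂ :=
  ∑ i : Fin n, (a i : ℂ) *
    Complex.exp (-(2 * Real.pi * Complex.I * ((i : ℕ) : ℂ) * ((j : ℕ) : ℂ)) / (n : ℂ))

/-- Transmissivity `ρ(a) = (1/n) ∑ i, a i`. -/
noncomputable def transmissivity {n : ℕ} (a : Fin n → ℝ) : ℝ :=
  (1 / (n : ℝ)) * ∑ i : Fin n, a i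

/-- LMMSE `m(n,t,W,J,d,a) = ∑_i 1/(1/d_i + γ|â_i|²)` with
`γ = t/(n(W+Jρ(a)))`. -/
noncomputable def lmmse (n : ℕ) (t W J : ℝ) (d : Fin n → ℝ) (a : Fin n → ℝ) : ℝ :=
  ∑ i : Fin n,
    1 / (1 / d i + (t / (n * (W + J * transmissivity a))) * ‖dft a i‖ ^ 2)

/-- Optimal LMMSE `m*(n,t,W,J,d)`: infimum of the LMMSE over apertures `a ∈ [0,1]^n`. -/
noncomputable def lmmseOpt (n : ℕ) (t W J : ℝ) (d : Fin n → ℝ) : ℝ :=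
  sInf {m | ∃ a : Fin n → ℝ, (∀ i, a i ∈ Set.Icc (0 : ℝ) 1) ∧ m = lmmse n t W J d a}

lemma aux_dft_eq {n : ℕ} (a : Fin n → ℝ) (j : Fin n) :
    dft a j = ∑ i : Fin n, (a i : ℂ) *
      ((Complex.exp (2 * Real.pi * Complex.I / n))⁻¹ ^ (i : ℕ)) ^ (j : ℕ) := by
  unfold dft
  refine Finset.sum_congr rfl fun i _ => ?_
  congr 1
  rw [← Complex.exp_neg, ← Complex.exp_nat_mul, ← Complex.exp_nat_mul]
  congr 1
  ring

lemma aux_orth {n : ℕ} (hn : 0 < n) (ζ : ℂ) (hζ : IsPrimitiveRoot ζ n) (i k : Fin n) :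
    ∑ j : Fin n, (ζ⁻¹ ^ (i : ℕ)) ^ (j : ℕ) * (ζ ^ (k : ℕ)) ^ (j : ℕ) =
      if i = k then (n : ℂ) else 0 := by
  have h0 : ζ ≠ 0 := hζ.ne_zero hn.ne'
  have e : ∀ j : Fin n, (ζ⁻¹ ^ (i : ℕ)) ^ (j : ℕ) * (ζ ^ (k : ℕ)) ^ (j : ℕ)
      = (ζ⁻¹ ^ (i : ℕ) * ζ ^ (k : ℕ)) ^ (j : ℕ) := fun j => (mul_pow _ _ _).symm
  simp_rw [e]
  rw [Fin.sum_univ_eq_sum_range (fun j => (ζ⁻¹ ^ (i : ℕ) * ζ ^ (k : ℕ)) ^ j) n]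
  split_ifs with h
  · subst h
    rw [← mul_pow, inv_mul_cancel₀ h0]
    simp
  · have hz : ζ⁻¹ ^ (i : ℕ) * ζ ^ (k : ℕ) ≠ 1 := by
      intro hh
      apply h
      rw [inv_pow, inv_mul_eq_one₀ (pow_ne_zero _ h0)] at hh
      exact Fin.ext (hζ.pow_inj i.2 k.2 hh)
    have hp : (ζ⁻¹ ^ (i : ℕ) * ζ ^ (k : ℕ)) ^ n = 1 := by
      rw [mul_pow, ← pow_mul, ← pow_mul, mul_comm _ n, mul_comm _ n, pow_mul, pow_mul, inv_pow,
        hζ.pow_eq_one]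
      simp
    rw [geom_sum_eq hz, hp]
    simp

lemma aux_parseval {n : ℕ} (hn : 0 < n) (a : Fin n → ℝ) :
    ∑ j : Fin n, ‖dft a j‖ ^ 2 = n * ∑ i, a i ^ 2 := by
  set ζ : ℂ := Complex.exp (2 * Real.pi * Complex.I / n) with hζd
  have hζ : IsPrimitiveRoot ζ n := Complex.isPrimitiveRoot_exp n hn.ne'
  have hc : (starRingEnd ℂ) ζ = ζ⁻¹ := by
    rw [hζd, ← Complex.exp_conj, ← Complex.exp_neg]
    congr 1
    simp [Complex.conj_ofNat]
    ring
  have key : ((∑ j : Fin n, ‖dft a j‖ ^ 2 : ℝ) : ℂ) = ((n * ∑ i, a i ^ 2 : ℝ) : ℂ) := by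
    push_cast
    have h1 : ∀ j : Fin n, ((‖dft a j‖ : ℂ)) ^ 2 = ∑ i : Fin n, ∑ k : Fin n,
        (a i : ℂ) * a k * ((ζ⁻¹ ^ (i : ℕ)) ^ (j : ℕ) * (ζ ^ (k : ℕ)) ^ (j : ℕ)) := by
      intro j
      rw [← Complex.mul_conj', aux_dft_eq, map_sum, Finset.sum_mul_sum]
      refine Finset.sum_congr rfl fun i _ => Finset.sum_congr rfl fun k _ => ?_
      rw [← hζd]
      simp only [map_mul, map_pow, map_inv₀, hc, Complex.conj_ofReal, inv_inv]
      ring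
    simp_rw [h1]
    rw [Finset.sum_comm, Finset.mul_sum]
    refine Finset.sum_congr rfl fun i _ => ?_
    rw [Finset.sum_comm]
    simp_rw [← Finset.mul_sum, aux_orth hn ζ hζ]
    simp
    ring
  exact_mod_cast key

lemma aux_floor_step (s x : ℝ) (h0 : 0 ≤ x) (h1 : x ≤ 1) :
    (⌊s⌋ : ℝ) + (s - ⌊s⌋) ^ 2 + x ^ 2 ≤ (⌊s + x⌋ : ℝ) + (s + x - ⌊s + x⌋) ^ 2 := by
  have hf0 : 0 ≤ s - ⌊s⌋ := sub_nonneg.2 (Int.floor_le s)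
  have hf1 : s - ⌊s⌋ < 1 := by linarith [Int.lt_floor_add_one s]
  by_cases h : s - ⌊s⌋ + x < 1
  · have : ⌊s + x⌋ = ⌊s⌋ := by
      rw [Int.floor_eq_iff]; constructor <;> linarith
    rw [this]
    nlinarith [mul_nonneg hf0 h0]
  · have : ⌊s + x⌋ = ⌊s⌋ + 1 := by
      rw [Int.floor_eq_iff]; push_cast; constructor <;> linarith
    rw [this]
    push_cast
    nlinarith [mul_nonneg (sub_nonneg.2 hf1.le) (sub_nonneg.2 h1)]

lemma aux_sq {ι : Type*} (S : Finset ι) (a : ι → ℝ) (ha : ∀ i, a i ∈ Set.Icc (0 : ℝ) 1) :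
    ∑ i ∈ S, a i ^ 2 ≤ (⌊∑ i ∈ S, a i⌋ : ℝ) + (∑ i ∈ S, a i - ⌊∑ i ∈ S, a i⌋) ^ 2 := by
  classical
  induction S using Finset.induction_on with
  | empty => simp
  | insert i S hi ih =>
    rw [Finset.sum_insert hi, Finset.sum_insert hi, add_comm (a i)]
    linarith [aux_floor_step (∑ i ∈ S, a i) (a i) (ha i).1 (ha i).2]

lemma aux_tangent (y z : ℝ) (hy : 0 < y) (hz : 0 < z) : 1 / y - (z - y) / y ^ 2 ≤ 1 / z := by
  have : 1 / z - (1 / y - (z - y) / y ^ 2) = (z - y) ^ 2 / (z * y ^ 2) := by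
    field_simp; ring
  have h2 : 0 ≤ (z - y) ^ 2 / (z * y ^ 2) := by positivity
  linarith

lemma aux_water {ι : Type*} (S : Finset ι) (c x p : ι → ℝ) (γ T : ℝ) (hγ : 0 < γ) (hT : 0 ≤ T)
    (hc : ∀ i, 0 < c i) (hx : ∀ i, 0 ≤ x i) (hp : ∀ i, p i = (1 / γ) * max (T - c i) 0)
    (hs : ∑ i ∈ S, x i ≤ ∑ i ∈ S, p i) :
    ∑ i ∈ S, 1 / (c i + γ * p i) ≤ ∑ i ∈ S, 1 / (c i + γ * x i) := by
  rcases hT.eq_or_lt with rfl | hT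
  · have hp0 : ∀ i, p i = 0 := fun i => by
      rw [hp, max_eq_right (by linarith [hc i])]; simp
    have h0 : ∑ i ∈ S, x i = 0 :=
      le_antisymm (by simpa [hp0] using hs) (Finset.sum_nonneg fun i _ => hx i)
    rw [Finset.sum_eq_zero_iff_of_nonneg (fun i _ => hx i)] at h0
    refine Finset.sum_le_sum fun i hi => ?_
    rw [hp0, h0 i hi]
  · have h : ∀ i ∈ S, 1 / (c i + γ * p i) - γ / T ^ 2 * (x i - p i) ≤ 1 / (c i + γ * x i) := by
      intro i _
      have hz : 0 < c i + γ * x i := by have := hc i; have := hx i; positivity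
      rcases le_total (c i) T with hcT | hcT
      · have hy : γ * p i = T - c i := by
          rw [hp, max_eq_left (by linarith)]; field_simp
        have := aux_tangent T _ hT hz
        rw [hy]
        have e : γ / T ^ 2 * (x i - p i) = (c i + γ * x i - T) / T ^ 2 := by
          rw [div_mul_eq_mul_div, mul_sub, hy]; ring
        rw [e]
        simpa using this
      · have hp0 : p i = 0 := by
          rw [hp, max_eq_right (by linarith)]; simp
        have := aux_tangent (c i) _ (hc i) hz
        have h3 : γ * x i / c i ^ 2 ≤ γ * x i / T ^ 2 := by
          have := hx i
          gcongr
        rw [hp0]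
        have e : γ / T ^ 2 * (x i - 0) = γ * x i / T ^ 2 := by ring
        rw [e]
        simp only [mul_zero, add_zero]
        have e2 : c i + γ * x i - c i = γ * x i := by ring
        rw [e2] at this
        linarith
    have h2 := Finset.sum_le_sum h
    rw [Finset.sum_sub_distrib, ← Finset.mul_sum, Finset.sum_sub_distrib] at h2
    have h3 : 0 ≤ γ / T ^ 2 := by positivity
    nlinarith

/-- Prop. 1 (waterfilling lower bound on the LMMSE). -/
theorem lmmse_waterfilling_lower_bound
    (n : ℕ) (hn : 2 ≤ n) (t W J θ T : ℝ)
    (ht : 0 < t) (hW : 0 < W) (hJ : 0 < J) (hθ : 0 < θ) (hT : 0 ≤ T)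
    (d a : Fin n → ℝ) (hd : ∀ i, 0 < d i)
    (hd0 : d ⟨0, by omega⟩ = θ / n)
    (ha : ∀ i, a i ∈ Set.Icc (0 : ℝ) 1)
    (ρ γ P : ℝ) (hρ : ρ = transmissivity a)
    (hγ : γ = t / (n * (W + J * ρ)))
    (hP : P = (n : ℝ) * ((⌊(n : ℝ) * ρ⌋ : ℝ) + ((n : ℝ) * ρ - (⌊(n : ℝ) * ρ⌋ : ℝ)) ^ 2)
            - (n : ℝ) ^ 2 * ρ ^ 2)
    (Pw : Fin n → ℝ) (hPw : ∀ i, Pw i = (1 / γ) * max (T - 1 / d i) 0)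
    (hsum : ∑ i ∈ Finset.univ.erase (⟨0, by omega⟩ : Fin n), Pw i = P) :
    1 / ((n : ℝ) / θ + γ * (n : ℝ) ^ 2 * ρ ^ 2) +
        ∑ i ∈ Finset.univ.erase (⟨0, by omega⟩ : Fin n), 1 / (1 / d i + γ * Pw i)
      ≤ lmmse n t W J d a := by
  have hn0 : 0 < n := by omega
  have hnR : (0 : ℝ) < n := by exact_mod_cast hn0
  have hs : (n : ℝ) * ρ = ∑ i, a i := by
    rw [hρ, transmissivity]; field_simp
  have hρ0 : 0 ≤ ρ := by
    have : 0 ≤ ∑ i, a i := Finset.sum_nonneg fun i _ => (ha i).1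
    rw [← hs] at this
    exact nonneg_of_mul_nonneg_right this hnR
  have hγ0 : 0 < γ := by rw [hγ]; positivity
  have hz : ‖dft a ⟨0, hn0⟩‖ ^ 2 = (n : ℝ) ^ 2 * ρ ^ 2 := by
    have : dft a ⟨0, hn0⟩ = ((n * ρ : ℝ) : ℂ) := by
      rw [hs]; simp [dft]
    rw [this, Complex.norm_real, Real.norm_eq_abs, sq_abs, mul_pow]
  have hx : ∑ i ∈ Finset.univ.erase (⟨0, hn0⟩ : Fin n), ‖dft a i‖ ^ 2 ≤ P := by
    have h1 := Finset.add_sum_erase Finset.univ (fun i => ‖dft a i‖ ^ 2)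
      (Finset.mem_univ (⟨0, hn0⟩ : Fin n))
    rw [aux_parseval hn0, hz] at h1
    have h2 := aux_sq Finset.univ a ha
    rw [← hs] at h2
    have h3 := mul_le_mul_of_nonneg_left h2 hnR.le
    rw [hP]
    linarith
  have hw := aux_water (Finset.univ.erase (⟨0, hn0⟩ : Fin n)) (fun i => 1 / d i)
    (fun i => ‖dft a i‖ ^ 2) Pw γ T hγ0 hT (fun i => one_div_pos.2 (hd i))
    (fun i => by positivity) hPw (hx.trans hsum.ge)
  unfold lmmse
  rw [← hρ, ← hγ, ← Finset.add_sum_erase Finset.univ _ (Finset.mem_univ (⟨0, hn0⟩ : Fin n)), hz,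
    hd0, one_div_div, ← mul_assoc]
  linarith
end

section
/- There exist infinitely many positive integers n (in particular all primes p ≡ 3 mod 4) with the following property: for all t, W, J, θ > 0, taking d = (θ/n)·(1,…,1) ∈ ℝ^n, there exists a ∈ [0,1]^n such that m(n, 2t, W, J, d, a) ≤ m*(n, t, W, J, d). That is, doubling the exposure time suffices for a (quadratic-residue based) binary aperture to match the optimal LMMSE for i.i.d. scenes. -/
/-- The property of an aperture size `n`: for all parameters and the i.i.d. scene prior
`d = (θ/n)·𝟙`, some aperture `a ∈ [0,1]^n` with doubled exposure time matches the
optimal LMMSE. -/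
def GoodApertureSize (n : ℕ) : Prop :=
  ∀ t W J θ : ℝ, 0 < t → 0 < W → 0 < J → 0 < θ →
    ∃ a : Fin n → ℝ, (∀ i, a i ∈ Set.Icc (0 : ℝ) 1) ∧
      lmmse n (2 * t) W J (fun _ => θ / n) a ≤ lmmseOpt n t W J (fun _ => θ / n)

lemma sff_dft_eq {k : ℕ} (a : ZMod (k+1) → ℝ) (j : ZMod (k+1)) :
    dft (n := k+1) a j = ∑ i : ZMod (k+1), (a i : ℂ) * ZMod.stdAddChar (-(i * j)) := by
  unfold dft
  refine Finset.sum_congr rfl fun (i : ZMod (k+1)) _ => ?_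
  congr 1
  have hi : ∀ i : ZMod (k+1), ((ZMod.val i : ℕ) : ZMod (k+1)) = i := fun i => ZMod.natCast_zmod_val i
  have h : (-(i * j) : ZMod (k+1)) = ((-((ZMod.val (n := k+1) i : ℤ) * (ZMod.val j : ℤ)) : ℤ) : ZMod (k+1)) := by
    push_cast
    rw [hi, hi]
  erw [h]
  rw [ZMod.stdAddChar_coe]
  congr 1
  push_cast
  have e1 : (ZMod.val (n := k+1) i) = ((show Fin (k+1) from i : Fin (k+1)) : ℕ) := rfl
  have e2 : (ZMod.val (n := k+1) j) = ((show Fin (k+1) from j : Fin (k+1)) : ℕ) := rfl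
  rw [e1, e2]
  ring

lemma sff_parseval {k : ℕ} (a : ZMod (k+1) → ℝ) :
    ∑ j : ZMod (k+1), ‖dft (n := k+1) a j‖ ^ 2 = ((k+1 : ℕ) : ℝ) * ∑ i : ZMod (k+1), a i ^ 2 := by
  have hc : ∀ j : ZMod (k+1), ((‖dft (n := k+1) a j‖ ^ 2 : ℝ) : ℂ) =
      ∑ x : ZMod (k+1), ∑ y : ZMod (k+1), (a x : ℂ) * (a y : ℂ) * ZMod.stdAddChar (j * (y - x)) := by
    intro j
    push_cast
    rw [← Complex.mul_conj', sff_dft_eq, map_sum, Finset.sum_mul_sum]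
    refine Finset.sum_congr rfl fun x _ => Finset.sum_congr rfl fun y _ => ?_
    rw [map_mul, Complex.conj_ofReal, ← AddChar.map_neg_eq_conj, neg_neg]
    have : j * (y - x) = -(x * j) + y * j := by ring
    rw [this, AddChar.map_add_eq_mul]
    ring
  have : ((∑ j : ZMod (k+1), ‖dft (n := k+1) a j‖ ^ 2 : ℝ) : ℂ) =
      ((((k+1 : ℕ) : ℝ) * ∑ i : ZMod (k+1), a i ^ 2 : ℝ) : ℂ) := by
    rw [Complex.ofReal_sum, Finset.sum_congr rfl fun j _ => hc j, Finset.sum_comm]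
    push_cast
    rw [Finset.mul_sum]
    refine Finset.sum_congr rfl fun x _ => ?_
    rw [Finset.sum_comm]
    simp_rw [← Finset.mul_sum, AddChar.sum_mulShift _ (ZMod.isPrimitive_stdAddChar (k+1)), sub_eq_zero]
    simp [ZMod.card]
    ring
  exact_mod_cast this

lemma sff_dft_zero {k : ℕ} (a : Fin (k+1) → ℝ) :
    ‖dft a 0‖ ^ 2 = (∑ i, a i) ^ 2 := by
  have : dft a 0 = ((∑ i, a i : ℝ) : ℂ) := by
    simp [dft]
  rw [this, Complex.norm_real, Real.norm_eq_abs, sq_abs]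

lemma sff_tangent (c x y : ℝ) (hc : 0 < c) (hx : 0 ≤ x) (hy : 0 ≤ y) :
    1 / (c + x) - (y - x) * (1 / (c + x) ^ 2) ≤ 1 / (c + y) := by
  have h1 : 0 < c + x := by linarith
  have h2 : 0 < c + y := by linarith
  have : 1 / (c + y) - (1 / (c + x) - (y - x) * (1 / (c + x) ^ 2))
      = (y - x) ^ 2 / ((c + y) * (c + x) ^ 2) := by
    field_simp
    ring
  have h3 : 0 ≤ (y - x) ^ 2 / ((c + y) * (c + x) ^ 2) := by positivity
  linarith

lemma sff_key {k : ℕ} (c x0 x1 : ℝ) (hc : 0 < c) (hx1 : 0 ≤ x1) (hx : x1 ≤ x0)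
    (y : Fin (k+1) → ℝ) (hy : ∀ i, 0 ≤ y i)
    (h : ∑ i, y i ≤ (k+1) * x1 ∨
      ((∑ i : Fin k, y i.succ ≤ k * x1) ∧ ∑ i, y i ≤ x0 + k * x1)) :
    1 / (c + x0) + k * (1 / (c + x1)) ≤ ∑ i, 1 / (c + y i) := by
  have hp1 : 0 < c + x1 := by linarith
  have hp0 : 0 < c + x0 := by linarith
  have hle : 1 / (c + x0) ≤ 1 / (c + x1) := one_div_le_one_div_of_le hp1 (by linarith)
  have hle2 : 1 / (c + x0) ^ 2 ≤ 1 / (c + x1) ^ 2 :=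
    one_div_le_one_div_of_le (by positivity) (by gcongr)
  have hq1 : 0 < 1 / (c + x1) ^ 2 := by positivity
  have hq0 : 0 < 1 / (c + x0) ^ 2 := by positivity
  rcases h with h | ⟨h1, h2⟩
  · have hs : ∑ i : Fin (k+1), (1 / (c + x1) - (y i - x1) * (1 / (c + x1) ^ 2)) ≤ ∑ i, 1 / (c + y i) :=
      Finset.sum_le_sum fun i _ => sff_tangent c x1 (y i) hc hx1 (hy i)
    rw [Finset.sum_sub_distrib, ← Finset.sum_mul, Finset.sum_sub_distrib] at hs
    simp only [Finset.sum_const, Finset.card_univ, Fintype.card_fin, nsmul_eq_mul] at hs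
    push_cast at hs
    nlinarith
  · rw [Fin.sum_univ_succ] at h2 ⊢
    have hs : ∑ i : Fin k, (1 / (c + x1) - (y i.succ - x1) * (1 / (c + x1) ^ 2)) ≤ ∑ i : Fin k, 1 / (c + y i.succ) :=
      Finset.sum_le_sum fun i _ => sff_tangent c x1 (y i.succ) hc hx1 (hy _)
    rw [Finset.sum_sub_distrib, ← Finset.sum_mul, Finset.sum_sub_distrib] at hs
    simp only [Finset.sum_const, Finset.card_univ, Fintype.card_fin, nsmul_eq_mul] at hs
    have h0 := sff_tangent c x0 (y 0) hc (hx1.trans hx) (hy 0)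
    have e1 : (k * x1 - ∑ i : Fin k, y i.succ) * (1 / (c + x0) ^ 2) ≤
        (k * x1 - ∑ i : Fin k, y i.succ) * (1 / (c + x1) ^ 2) :=
      mul_le_mul_of_nonneg_left hle2 (by linarith)
    have e2 : (y 0 - x0) * (1 / (c + x0) ^ 2) ≤ (k * x1 - ∑ i : Fin k, y i.succ) * (1 / (c + x0) ^ 2) :=
      mul_le_mul_of_nonneg_right (by linarith) hq0.le
    linarith

lemma sff_aperture (k : ℕ) (hp : (k+1).Prime) (h4 : (k+1) % 4 = 3) :
    ∃ a : ZMod (k+1) → ℝ, (∀ i, a i ∈ Set.Icc (0:ℝ) 1) ∧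
      ∑ i, a i = ((k:ℝ) + 2) / 2 ∧
      ∀ j : ZMod (k+1), j ≠ 0 → ‖dft (n := k+1) a j‖ ^ 2 = ((k:ℝ) + 2) / 4 := by
  have : Fact (k+1).Prime := ⟨hp⟩
  have hchar : ringChar (ZMod (k+1)) ≠ 2 := by
    rw [ZMod.ringChar_zmod_n]; omega
  let χ := quadraticChar (ZMod (k+1))
  refine ⟨fun i => (1 + (χ i : ℝ) + if i = 0 then 1 else 0) / 2, ?_, ?_, ?_⟩
  · intro i
    by_cases hi : i = 0
    · simp [hi, χ]
    · rcases quadraticChar_dichotomy hi with h | h <;> simp [hi, χ, h]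
  · have h0 : ∑ i, (χ i : ℝ) = 0 := by
      have := quadraticChar_sum_zero hchar
      exact_mod_cast this
    rw [← Finset.sum_div, Finset.sum_add_distrib, Finset.sum_add_distrib, h0]
    simp [ZMod.card]
    ring
  · intro j hj
    let ψ : AddChar (ZMod (k+1)) ℂ := AddChar.mulShift ZMod.stdAddChar (-j)
    have hψ1 : ψ ≠ 1 := ZMod.isPrimitive_stdAddChar (k+1) (neg_ne_zero.mpr hj)
    have hψ : ψ.IsPrimitive := AddChar.IsPrimitive.of_ne_one hψ1
    let χ' := χ.ringHomComp (Int.castRingHom ℂ)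
    have hχ1 : χ' ≠ 1 :=
      (MulChar.ringHomComp_ne_one_iff (RingHom.injective_int _)).mpr (quadraticChar_ne_one hchar)
    have hχ2 : χ'.IsQuadratic := (quadraticChar_isQuadratic (ZMod (k+1))).comp _
    have hG := gaussSum_sq hχ1 hχ2 hψ
    have hm : χ (-1) = -1 := by
      have := quadraticChar_neg_one hchar
      rw [ZMod.card, ZMod.χ₄_nat_three_mod_four h4] at this
      exact this
    have hm' : χ' (-1) = -1 := by
      simp [χ', MulChar.ringHomComp_apply, hm]
    rw [hm', ZMod.card] at hG
    have hd : dft (n := k+1) (fun i : ZMod (k+1) => (1 + (χ i : ℝ) + if i = 0 then 1 else 0) / 2) j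
        = (1 + gaussSum χ' ψ) / 2 := by
      rw [sff_dft_eq]
      have e : ∀ i : ZMod (k+1), (((1 + (χ i : ℝ) + if i = 0 then 1 else 0) / 2 : ℝ) : ℂ) * ZMod.stdAddChar (-(i * j))
          = (ψ i + χ' i * ψ i + if i = 0 then 1 else 0) / 2 := by
        intro i
        have : ψ i = ZMod.stdAddChar (-(i * j)) := by
          simp only [ψ, AddChar.mulShift_apply]
          congr 1; ring
        rw [← this]
        have h2 : χ' i = ((χ i : ℤ) : ℂ) := rfl
        rw [h2]
        by_cases hi : i = 0
        · simp [hi, AddChar.map_zero_eq_one]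
        · simp [hi]; ring
      rw [Finset.sum_congr rfl fun i _ => e i, ← Finset.sum_div, Finset.sum_add_distrib,
        Finset.sum_add_distrib, AddChar.sum_eq_zero_of_ne_one hψ1]
      simp [gaussSum]
      ring
    rw [hd]
    generalize gaussSum χ' ψ = z at hG
    have hre := congrArg Complex.re hG
    have him := congrArg Complex.im hG
    simp [sq] at hre him
    have hz : z.re = 0 := by
      rcases (by grind : z.re = 0 ∨ z.im = 0) with h | h
      · exact h
      · rw [h] at hre
        nlinarith [mul_self_nonneg z.re, (Nat.cast_nonneg k : (0:ℝ) ≤ k)]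
    rw [norm_div, div_pow, ← Complex.normSq_eq_norm_sq, Complex.normSq_apply]
    simp [hz] at hre ⊢
    rw [show z.im * z.im = k + 1 by linarith]
    ring

lemma sff_aperture_fin (k : ℕ) (hp : (k+1).Prime) (h4 : (k+1) % 4 = 3) :
    ∃ a : Fin (k+1) → ℝ, (∀ i, a i ∈ Set.Icc (0:ℝ) 1) ∧
      ∑ i, a i = ((k:ℝ) + 2) / 2 ∧
      ∀ j : Fin (k+1), j ≠ 0 → ‖dft a j‖ ^ 2 = ((k:ℝ) + 2) / 4 :=
  sff_aperture k hp h4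

set_option maxHeartbeats 1000000 in
lemma sff_good (k : ℕ) (hp : (k+1).Prime) (h4 : (k+1) % 4 = 3) : GoodApertureSize (k+1) := by
  intro t W J θ ht hW hJ hθ
  obtain ⟨a, ha, hsum, hflat⟩ := sff_aperture_fin k hp h4
  refine ⟨a, ha, ?_⟩
  refine le_csInf ⟨_, a, ha, rfl⟩ ?_
  rintro m ⟨b, hb, rfl⟩
  have hk : (2:ℝ) ≤ k := by
    have : 2 ≤ k := by omega
    exact_mod_cast this
  set n : ℝ := (k:ℝ) + 1 with hn
  have hn3 : 3 ≤ n := by linarith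
  have hcast : ((k+1 : ℕ) : ℝ) = n := by push_cast; rfl
  set ρ0 : ℝ := transmissivity a with hρ0
  have hρ0' : ρ0 = (n + 1) / (2 * n) := by
    rw [hρ0, transmissivity, hcast]
    rw [hsum]
    field_simp
    ring
  set ρ : ℝ := transmissivity b with hρ
  have hbs : ∑ i, b i = n * ρ := by
    rw [hρ, transmissivity, hcast]; field_simp
  have hρnn : 0 ≤ ρ := by
    have : 0 ≤ ∑ i, b i := Finset.sum_nonneg fun i _ => (hb i).1
    rw [hbs] at this
    exact nonneg_of_mul_nonneg_right this (by linarith)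
  have hρ1 : ρ ≤ 1 := by
    have : ∑ i, b i ≤ ∑ i : Fin (k+1), (1:ℝ) := Finset.sum_le_sum fun i _ => (hb i).2
    rw [hbs] at this
    simp at this
    nlinarith
  have hpars : ∑ j : Fin (k+1), ‖dft b j‖ ^ 2 ≤ n * (n * ρ) := by
    have := sff_parseval (k := k) b
    rw [hcast] at this
    refine (le_of_eq this).trans ?_
    rw [← hbs]
    refine mul_le_mul_of_nonneg_left ?_ (by linarith)
    refine Finset.sum_le_sum fun i _ => ?_
    have := hb i
    nlinarith [this.1, this.2]
  have hρ0p : 0 < ρ0 := by rw [hρ0']; positivity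
  have hD0 : 0 < W + J * ρ0 := by positivity
  have hD : 0 < W + J * ρ := by positivity
  have hc : 0 < 1 / (θ / n) := by positivity
  have hL : lmmse (k+1) (2*t) W J (fun _ => θ / ((k+1 : ℕ) : ℝ)) a =
      1 / (1 / (θ / n) + 2 * t / (n * (W + J * ρ0)) * (n * ρ0) ^ 2) +
      k * (1 / (1 / (θ / n) + 2 * t / (n * (W + J * ρ0)) * ((n + 1) / 4))) := by
    unfold lmmse
    rw [Fin.sum_univ_succ, hcast]
    have hs : ∀ i : Fin k, ‖dft (n := k+1) a i.succ‖ ^ 2 = (n + 1) / 4 := by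
      intro i
      have := hflat (i.succ : Fin (k+1)) (Fin.succ_ne_zero i)
      rw [this, hn]; ring
    simp only [hs]
    rw [sff_dft_zero]
    rw [hsum]
    have : ((k:ℝ) + 2) / 2 = n * ρ0 := by rw [hρ0']; field_simp; rw [hn]; ring
    rw [this]
    simp [hρ0]
  rw [hL]
  unfold lmmse
  rw [hcast]
  have hg0 : 0 < 2 * t / (n * (W + J * ρ0)) := by positivity
  have hg : 0 < t / (n * (W + J * ρ)) := by positivity
  refine sff_key (1 / (θ / n)) _ _ hc (by positivity) ?_ (fun i => t / (n * (W + J * ρ)) * ‖dft b i‖ ^ 2)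
    (fun i => by positivity) ?_
  · refine mul_le_mul_of_nonneg_left ?_ hg0.le
    rw [hρ0']
    have : n * ((n + 1) / (2 * n)) = (n + 1) / 2 := by field_simp
    rw [this]
    nlinarith
  · have hS : ∑ i : Fin (k+1), t / (n * (W + J * ρ)) * ‖dft b i‖ ^ 2 ≤ t * (n * ρ / (W + J * ρ)) := by
      rw [← Finset.mul_sum]
      refine (mul_le_mul_of_nonneg_left hpars hg.le).trans (le_of_eq ?_)
      field_simp
    have hx1 : 2 * t / (n * (W + J * ρ0)) * ((n + 1) / 4) = t * (ρ0 / (W + J * ρ0)) := by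
      have : n + 1 = 2 * n * ρ0 := by rw [hρ0']; field_simp
      rw [this]; field_simp; ring
    have hx0 : 2 * t / (n * (W + J * ρ0)) * (n * ρ0) ^ 2 = t * ((n + 1) * ρ0 / (W + J * ρ0)) := by
      have : n + 1 = 2 * n * ρ0 := by rw [hρ0']; field_simp
      rw [this]; field_simp
    have h2n : 2 * n * ρ0 = n + 1 := by rw [hρ0']; field_simp
    have hkn : (k:ℝ) = n - 1 := by rw [hn]; ring
    rw [hx1, hx0]
    by_cases hcase : ρ ≤ ρ0
    · left
      refine hS.trans ?_
      rw [← hn, mul_left_comm]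
      refine mul_le_mul_of_nonneg_left ?_ ht.le
      rw [← mul_div_assoc, div_le_div_iff₀ hD hD0]
      have : W * ρ ≤ W * ρ0 := mul_le_mul_of_nonneg_left hcase hW.le
      nlinarith
    · right
      push Not at hcase
      have hDD : W + J * ρ0 ≤ W + J * ρ := by gcongr
      constructor
      · have h0 : t / (n * (W + J * ρ)) * ‖dft b 0‖ ^ 2 = t * (n * ρ ^ 2 / (W + J * ρ)) := by
          rw [sff_dft_zero, hbs]; field_simp
        rw [Fin.sum_univ_succ, h0] at hS
        have : ∑ i : Fin k, t / (n * (W + J * ρ)) * ‖dft b i.succ‖ ^ 2 ≤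
            t * (n * (ρ * (1 - ρ)) / (W + J * ρ)) := by
          refine (le_sub_iff_add_le'.mpr hS).trans (le_of_eq ?_)
          field_simp
        refine this.trans ?_
        rw [mul_left_comm (k:ℝ)]
        refine mul_le_mul_of_nonneg_left ?_ ht.le
        rw [← mul_div_assoc]
        refine div_le_div₀ (by rw [hkn]; exact mul_nonneg (by linarith) hρ0p.le) ?_ hD0 hDD
        have h1 : ρ * (1 - ρ) ≤ 1 / 4 := by nlinarith [sq_nonneg (ρ - 1/2)]
        have h3 : n * (ρ * (1 - ρ)) ≤ n * (1 / 4) := mul_le_mul_of_nonneg_left h1 (by linarith)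
        have h4 : (n - 1) * ρ0 = (n + 1) / 2 - ρ0 := by linarith
        have h5 : ρ0 < 1 := hcase.trans_le hρ1
        rw [hkn, h4]
        linarith
      · refine hS.trans ?_
        have e : t * ((n + 1) * ρ0 / (W + J * ρ0)) + k * (t * (ρ0 / (W + J * ρ0)))
            = t * ((n + 1) / (W + J * ρ0)) := by
          rw [← h2n, hkn]; field_simp; linarith
        rw [e]
        refine mul_le_mul_of_nonneg_left ?_ ht.le
        exact div_le_div₀ (by linarith) ((mul_le_of_le_one_right (by linarith) hρ1).trans (by linarith)) hD0 hDD

/-- Prop. 2: there are infinitely many positive integers `n` (in particular all primes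
`p ≡ 3 (mod 4)`) for which doubling the exposure time suffices for some binary
(quadratic-residue based) aperture to match the optimal LMMSE on i.i.d. scenes. -/
theorem spectrally_flat_factor_two
    : (∀ p : ℕ, p.Prime → p % 4 = 3 → GoodApertureSize p) ∧
      {n : ℕ | 0 < n ∧ GoodApertureSize n}.Infinite := by
  have h : ∀ p : ℕ, p.Prime → p % 4 = 3 → GoodApertureSize p := by
    intro p hp h4
    obtain ⟨k, rfl⟩ : ∃ k, p = k + 1 := ⟨p - 1, by omega⟩
    exact sff_good k hp h4
  refine ⟨h, ?_⟩
  have hinf := Nat.infinite_setOfPred_prime_and_modEq (q := 4) (a := 3) (by norm_num) (by norm_num)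
  refine hinf.mono ?_
  rintro p ⟨hp, hm⟩
  exact ⟨hp.pos, h p hp hm⟩
end

section
/- For every n ≥ 2, all t, W, J > 0, and every d ∈ ℝ^n with strictly positive entries, there exists a ∈ [0,1]^n such that m(n, 2M(n)²t, W, J, d, a) ≤ m*(n, t, W, J, d), where M(n) = (3π/2)β(n)^{−2}. -/
/-- The real DFT orthonormal basis vectors: with `ω = 2π/n` and `h = ⌈(n-1)/2⌉ = n/2`
(natural division), `ψ_0(i) = 1`, `ψ_j(i) = √2 cos(ωji)` for `0 < j < h`,
`ψ_h(i) = cos(ωhi)` if `n` even and `√2 cos(ωhi)` if `n` odd, and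
`ψ_j(i) = √2 sin(ωji)` for `h < j < n`. -/
noncomputable def psi (n : ℕ) (j i : ℕ) : ℝ :=
  if j = 0 then 1
  else if j < n / 2 then Real.sqrt 2 * Real.cos (2 * Real.pi / n * j * i)
  else if j = n / 2 then
    (if n % 2 = 0 then Real.cos (2 * Real.pi / n * j * i)
     else Real.sqrt 2 * Real.cos (2 * Real.pi / n * j * i))
  else Real.sqrt 2 * Real.sin (2 * Real.pi / n * j * i)

/-- Normalized ℓ¹ norm `(1/n) ∑_{i<n} |ψ_j(i)|` of the `j`-th real DFT basis vector. -/
noncomputable def l1psi (n j : ℕ) : ℝ := (1 / (n : ℝ)) * ∑ i ∈ Finset.range n, |psi n j i|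

/-- `β(n) = min_{0 ≤ j < n} (1/n) ∑_i |ψ_j(i)|`. -/
noncomputable def beta (n : ℕ) : ℝ := sInf {x | ∃ j < n, x = l1psi n j}

/-- Nazarov's constant `M(n) = (3π/2) β(n)⁻²`. -/
noncomputable def Mnaz (n : ℕ) : ℝ := (3 * Real.pi / 2) / (beta n) ^ 2


lemma naz_calc (φ φ' φ'' : ℝ → ℝ) (C : ℝ) (h1 : ∀ s, HasDerivAt φ (φ' s) s)
    (h2 : ∀ s, HasDerivAt φ' (φ'' s) s) (hC : ∀ s ∈ Set.Icc (0:ℝ) 1, C ≤ φ'' s) :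
    φ 0 + φ' 0 + C / 2 ≤ φ 1 := by
  have hG : ∀ s, HasDerivAt (fun s => φ' s - C * s) (φ'' s - C) s := by
    intro s
    refine ((h2 s).sub ((hasDerivAt_id s).const_mul C)).congr_deriv ?_
    simp
  have mG : MonotoneOn (fun s => φ' s - C * s) (Set.Icc 0 1) := by
    apply monotoneOn_of_deriv_nonneg (convex_Icc 0 1)
    · exact fun s _ => (hG s).continuousAt.continuousWithinAt
    · exact fun s _ => (hG s).differentiableAt.differentiableWithinAt
    · intro s hs
      rw [(hG s).deriv]
      have := hC s (interior_subset hs)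
      linarith
  have hH : ∀ s, HasDerivAt (fun s => φ s - C / 2 * s ^ 2 - φ' 0 * s) (φ' s - C * s - φ' 0) s := by
    intro s
    have := ((h1 s).sub (((hasDerivAt_pow 2 s)).const_mul (C/2))).sub
      ((hasDerivAt_id s).const_mul (φ' 0))
    refine this.congr_deriv ?_
    simp; ring
  have mH : MonotoneOn (fun s => φ s - C / 2 * s ^ 2 - φ' 0 * s) (Set.Icc 0 1) := by
    apply monotoneOn_of_deriv_nonneg (convex_Icc 0 1)
    · exact fun s _ => (hH s).continuousAt.continuousWithinAt
    · exact fun s _ => (hH s).differentiableAt.differentiableWithinAt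
    · intro s hs
      rw [(hH s).deriv]
      have hs' := interior_subset hs
      have := mG (Set.left_mem_Icc.2 zero_le_one) hs' hs'.1
      simp only at this
      linarith
  have := mH (Set.left_mem_Icc.2 zero_le_one) (Set.right_mem_Icc.2 zero_le_one) zero_le_one
  simp only at this
  linarith

noncomputable def nazPhi (x : ℝ) : ℝ := x * Real.arctan x - Real.log (1 + x ^ 2) / 2

lemma nazPhi_deriv (x : ℝ) : HasDerivAt nazPhi (Real.arctan x) x := by
  have hx : (1 + x ^ 2) ≠ 0 := by positivity
  have h1 := (hasDerivAt_id x).mul (Real.hasDerivAt_arctan x)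
  have h2 := (((hasDerivAt_pow 2 x).const_add 1).log hx).div_const 2
  refine (h1.sub h2).congr_deriv ?_
  simp
  field_simp
  ring

lemma naz_main {ι κ : Type*} [Fintype ι] [Fintype κ] [DecidableEq κ] (w : ℝ) (hw : 0 < w)
    (hw1 : w * (Fintype.card ι : ℝ) = 1)
    (ψ : κ → ι → ℝ) (β : ℝ) (hβ : 0 < β) (h1 : ∀ k, β ≤ w * ∑ i, |ψ k i|)
    (hB : ∀ c : κ → ℝ, w * ∑ i, (∑ k, c k * ψ k i) ^ 2 ≤ ∑ k, c k ^ 2)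
    (a : κ → ℝ) (ha : ∑ k, a k ^ 2 ≤ 1) :
    ∃ F : ι → ℝ, ∀ k, |a k| * β ^ 2 / 2 ≤ |w * ∑ i, Real.arctan (F i) * ψ k i| := by
  let sg : Bool → ℝ := fun b => if b then 1 else -1
  have sg2 : ∀ b, sg b ^ 2 = 1 := by intro b; cases b <;> simp [sg]
  have sgn : ∀ b, sg (!b) = - sg b := by intro b; cases b <;> simp [sg]
  let FF : (κ → Bool) → ι → ℝ := fun ε i => ∑ k, (sg (ε k) * a k) * ψ k i
  obtain ⟨ε, hε⟩ := Finite.exists_max (fun ε : κ → Bool => w * ∑ i, nazPhi (FF ε i))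
  refine ⟨FF ε, fun k => ?_⟩
  set c : ℝ := sg (ε k) * a k with hc
  have hc2 : c ^ 2 = a k ^ 2 := by rw [hc, mul_pow, sg2, one_mul]
  have hcabs : |a k| = |c| := by rw [← sq_eq_sq_iff_abs_eq_abs, hc2]
  set h : ι → ℝ := fun i => 2 * c * ψ k i with hh
  have upd : ∀ (v : ℝ) (i : ι), ∑ l, (Function.update (fun l => sg (ε l) * a l) k v) l * ψ l i
      = FF ε i + (v - c) * ψ k i := by
    intro v i
    simp only [FF]
    rw [← Finset.add_sum_erase _ _ (Finset.mem_univ k),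
      ← Finset.add_sum_erase (a := k) Finset.univ (fun l => sg (ε l) * a l * ψ l i)
        (Finset.mem_univ k)]
    have : ∑ x ∈ Finset.univ.erase k, Function.update (fun l ↦ sg (ε l) * a l) k v x * ψ x i
        = ∑ x ∈ Finset.univ.erase k, sg (ε x) * a x * ψ x i := by
      apply Finset.sum_congr rfl
      intro l hl
      rw [Function.update_of_ne (Finset.ne_of_mem_erase hl)]
    rw [this, Function.update_self, hc]
    ring
  have flip : ∀ i, FF (Function.update ε k (!ε k)) i = FF ε i - h i := by
    intro i
    have := upd (-c) i
    rw [hh]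
    simp only
    rw [show FF ε i - 2 * c * ψ k i = FF ε i + (-c - c) * ψ k i by ring, ← this]
    simp only [FF]
    apply Finset.sum_congr rfl
    intro l _
    by_cases hl : l = k
    · subst hl; simp [sgn, hc]
    · simp [hl]
  have key : ∀ s ∈ Set.Icc (0:ℝ) 1, 2 * c ^ 2 * β ^ 2 ≤
      w * ∑ i, h i * (h i / (1 + (FF ε i - s * h i) ^ 2)) := by
    intro s hs
    set G : ι → ℝ := fun i => FF ε i - s * h i with hG
    have hG2 : w * ∑ i, G i ^ 2 ≤ 1 := by
      have := hB (Function.update (fun l => sg (ε l) * a l) k ((1 - 2 * s) * c))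
      simp only [upd] at this
      have e : ∀ i, FF ε i + ((1 - 2 * s) * c - c) * ψ k i = G i := by
        intro i; simp only [hG, hh]; ring
      simp only [e] at this
      refine this.trans (le_trans ?_ ha)
      apply Finset.sum_le_sum
      intro l _
      by_cases hl : l = k
      · subst hl
        rw [Function.update_self, mul_pow, hc2]
        have : (1 - 2 * s) ^ 2 ≤ 1 := by nlinarith [hs.1, hs.2]
        nlinarith [sq_nonneg (a l)]
      · rw [Function.update_of_ne hl, mul_pow, sg2, one_mul]
    have hpos : ∀ i, 0 < 1 + G i ^ 2 := fun i => by positivity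
    have cs : (∑ i, |ψ k i|) ^ 2 ≤ (∑ i, ψ k i ^ 2 / (1 + G i ^ 2)) * ∑ i, (1 + G i ^ 2) := by
      apply Finset.sum_sq_le_sum_mul_sum_of_sq_le_mul
      · intro i _; have := hpos i; positivity
      · intro i _; exact (hpos i).le
      · intro i _; have := (hpos i).ne'; rw [sq_abs]; apply le_of_eq; field_simp
    have hsum : w * ∑ i, (1 + G i ^ 2) ≤ 2 := by
      rw [Finset.sum_add_distrib, mul_add]
      simp only [Finset.sum_const, Finset.card_univ, nsmul_eq_mul, mul_one]
      linarith
    set A := ∑ i, ψ k i ^ 2 / (1 + G i ^ 2) with hA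
    have hA0 : 0 ≤ A := Finset.sum_nonneg fun i _ => by have := hpos i; positivity
    have hb2 : β ^ 2 ≤ 2 * (w * A) := by
      calc β ^ 2 ≤ (w * ∑ i, |ψ k i|) ^ 2 := pow_le_pow_left₀ hβ.le (h1 k) 2
        _ = w ^ 2 * (∑ i, |ψ k i|) ^ 2 := by ring
        _ ≤ w ^ 2 * (A * ∑ i, (1 + G i ^ 2)) := by gcongr
        _ = (w * A) * (w * ∑ i, (1 + G i ^ 2)) := by ring
        _ ≤ (w * A) * 2 := by gcongr
        _ = _ := by ring
    have : w * ∑ i, h i * (h i / (1 + (G i) ^ 2)) = 4 * c ^ 2 * (w * A) := by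
      rw [hA, Finset.mul_sum, Finset.mul_sum, Finset.mul_sum]
      apply Finset.sum_congr rfl
      intro i _
      simp only [hh]; ring
    change _ ≤ w * ∑ i, h i * (h i / (1 + (G i) ^ 2))
    rw [this]
    nlinarith [sq_nonneg c]
  have hlin : ∀ i s, HasDerivAt (fun s : ℝ => FF ε i - s * h i) (-h i) s := by
    intro i s
    simpa using ((hasDerivAt_id s).mul_const (h i)).const_sub (FF ε i)
  have C := naz_calc (fun s => w * ∑ i, nazPhi (FF ε i - s * h i))
    (fun s => w * ∑ i, -(h i) * Real.arctan (FF ε i - s * h i))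
    (fun s => w * ∑ i, h i * (h i / (1 + (FF ε i - s * h i) ^ 2)))
    (2 * c ^ 2 * β ^ 2) ?_ ?_ key
  · have m := hε (Function.update ε k (!ε k))
    simp only [flip] at m
    simp only [zero_mul, sub_zero, one_mul] at C
    set T := w * ∑ i, Real.arctan (FF ε i) * ψ k i with hT
    have e : w * ∑ i, -(h i) * Real.arctan (FF ε i) = - (2 * c * T) := by
      rw [hT, Finset.mul_sum, Finset.mul_sum, Finset.mul_sum, ← Finset.sum_neg_distrib]
      apply Finset.sum_congr rfl
      intro i _
      simp only [hh]; ring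
    rw [e] at C
    have fin : c ^ 2 * β ^ 2 ≤ 2 * c * T := by linarith
    rw [hcabs]
    by_cases c0 : c = 0
    · simp [c0]
    · have cp : 0 < |c| := abs_pos.2 c0
      have : 2 * c * T ≤ 2 * |c| * |T| := by
        have := le_abs_self (c * T)
        rw [abs_mul] at this
        linarith
      rw [← sq_abs c] at fin
      have : |c| * (|c| * β ^ 2 / 2) ≤ |c| * |T| := by nlinarith
      exact le_of_mul_le_mul_left this cp
  · intro s
    apply HasDerivAt.const_mul
    apply HasDerivAt.fun_sum
    intro i _
    refine ((nazPhi_deriv _).comp s (hlin i s)).congr_deriv ?_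
    ring
  · intro s
    apply HasDerivAt.const_mul
    apply HasDerivAt.fun_sum
    intro i _
    refine (((Real.hasDerivAt_arctan _).comp s (hlin i s)).const_mul (-h i)).congr_deriv ?_
    ring

lemma naz_sum_exp (n : ℕ) (hn : 0 < n) (m : ℤ) :
    ∑ i ∈ Finset.range n, Complex.exp ((2 * Real.pi / n * m * i : ℝ) * Complex.I)
      = if (n : ℤ) ∣ m then (n : ℂ) else 0 := by
  have hn0 : (n : ℂ) ≠ 0 := by exact_mod_cast hn.ne'
  set z : ℂ := Complex.exp ((2 * Real.pi / n * m : ℝ) * Complex.I) with hz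
  have hp : ∀ i : ℕ, Complex.exp ((2 * Real.pi / n * m * i : ℝ) * Complex.I) = z ^ i := by
    intro i
    rw [hz, ← Complex.exp_nat_mul]
    congr 1
    push_cast; ring
  simp only [hp]
  have hzn : z ^ n = 1 := by
    rw [hz, ← Complex.exp_nat_mul, Complex.exp_eq_one_iff]
    refine ⟨m, ?_⟩
    push_cast
    field_simp
  have hz1 : z = 1 ↔ (n : ℤ) ∣ m := by
    rw [hz, Complex.exp_eq_one_iff]
    constructor
    · rintro ⟨k, hk⟩
      refine ⟨k, ?_⟩
      have hpi : (Real.pi : ℂ) ≠ 0 := by exact_mod_cast Real.pi_ne_zero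
      push_cast at hk
      field_simp at hk
      have : ((m : ℤ) : ℂ) = ((n * k : ℤ) : ℂ) := by
        push_cast
        linear_combination hk
      exact_mod_cast this
    · rintro ⟨k, rfl⟩
      refine ⟨k, ?_⟩
      push_cast
      field_simp
  split_ifs with h
  · rw [hz1.2 h]; simp
  · have h1 : z - 1 ≠ 0 := fun e => h (hz1.1 (sub_eq_zero.1 e))
    have := geom_sum_mul z n
    rw [hzn, sub_self] at this
    exact (mul_eq_zero.1 this).resolve_right h1

lemma naz_sum_cos (n : ℕ) (hn : 0 < n) (m : ℤ) :
    ∑ i ∈ Finset.range n, Real.cos (2 * Real.pi / n * m * i)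
      = if (n : ℤ) ∣ m then (n : ℝ) else 0 := by
  have := congrArg Complex.re (naz_sum_exp n hn m)
  rw [Complex.re_sum] at this
  simp only [Complex.exp_ofReal_mul_I_re] at this
  rw [this]
  split_ifs <;> simp

lemma naz_sum_sin (n : ℕ) (hn : 0 < n) (m : ℤ) :
    ∑ i ∈ Finset.range n, Real.sin (2 * Real.pi / n * m * i) = 0 := by
  have := congrArg Complex.im (naz_sum_exp n hn m)
  rw [Complex.im_sum] at this
  simp only [Complex.exp_ofReal_mul_I_im] at this
  rw [this]
  split_ifs <;> simp

lemma naz_cc (n : ℕ) (hn : 0 < n) (j k : ℕ) :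
    ∑ i ∈ Finset.range n, Real.cos (2 * Real.pi / n * j * i) * Real.cos (2 * Real.pi / n * k * i)
      = ((if (n : ℤ) ∣ (j : ℤ) - k then (n : ℝ) else 0)
        + (if (n : ℤ) ∣ (j : ℤ) + k then (n : ℝ) else 0)) / 2 := by
  rw [← naz_sum_cos n hn, ← naz_sum_cos n hn, ← Finset.sum_add_distrib, Finset.sum_div]
  apply Finset.sum_congr rfl
  intro i _
  have := Real.two_mul_cos_mul_cos (2 * Real.pi / n * j * i) (2 * Real.pi / n * k * i)
  push_cast
  rw [show 2 * Real.pi / n * ((j:ℝ) - k) * i = 2 * Real.pi / n * j * i - 2 * Real.pi / n * k * i by ring,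
    show 2 * Real.pi / n * ((j:ℝ) + k) * i = 2 * Real.pi / n * j * i + 2 * Real.pi / n * k * i by ring]
  linarith

lemma naz_ss (n : ℕ) (hn : 0 < n) (j k : ℕ) :
    ∑ i ∈ Finset.range n, Real.sin (2 * Real.pi / n * j * i) * Real.sin (2 * Real.pi / n * k * i)
      = ((if (n : ℤ) ∣ (j : ℤ) - k then (n : ℝ) else 0)
        - (if (n : ℤ) ∣ (j : ℤ) + k then (n : ℝ) else 0)) / 2 := by
  rw [← naz_sum_cos n hn, ← naz_sum_cos n hn, ← Finset.sum_sub_distrib, Finset.sum_div]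
  apply Finset.sum_congr rfl
  intro i _
  have := Real.two_mul_sin_mul_sin (2 * Real.pi / n * j * i) (2 * Real.pi / n * k * i)
  push_cast
  rw [show 2 * Real.pi / n * ((j:ℝ) - k) * i = 2 * Real.pi / n * j * i - 2 * Real.pi / n * k * i by ring,
    show 2 * Real.pi / n * ((j:ℝ) + k) * i = 2 * Real.pi / n * j * i + 2 * Real.pi / n * k * i by ring]
  linarith

lemma naz_sc (n : ℕ) (hn : 0 < n) (j k : ℕ) :
    ∑ i ∈ Finset.range n, Real.sin (2 * Real.pi / n * j * i) * Real.cos (2 * Real.pi / n * k * i)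
      = 0 := by
  have h1 := naz_sum_sin n hn ((j : ℤ) - k)
  have h2 := naz_sum_sin n hn ((j : ℤ) + k)
  have : 2 * ∑ i ∈ Finset.range n, Real.sin (2 * Real.pi / n * j * i) * Real.cos (2 * Real.pi / n * k * i)
      = 0 + 0 := by
    refine Eq.trans ?_ (congrArg₂ (fun x y : ℝ => x + y) h1 h2)
    rw [Finset.mul_sum, ← Finset.sum_add_distrib]
    apply Finset.sum_congr rfl
    intro i _
    have := Real.two_mul_sin_mul_cos (2 * Real.pi / n * j * i) (2 * Real.pi / n * k * i)
    push_cast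
    rw [show 2 * Real.pi / n * ((j:ℝ) - k) * i = 2 * Real.pi / n * j * i - 2 * Real.pi / n * k * i by ring,
      show 2 * Real.pi / n * ((j:ℝ) + k) * i = 2 * Real.pi / n * j * i + 2 * Real.pi / n * k * i by ring]
    linarith
  linarith

noncomputable def nazc (n j : ℕ) : ℝ := if j = 0 ∨ 2 * j = n then 1 else Real.sqrt 2

lemma nazc_ne (n j : ℕ) : nazc n j ≠ 0 := by
  unfold nazc; split_ifs <;> simp

lemma psi_cos (n j i : ℕ) (hj : j ≤ n / 2) :
    psi n j i = nazc n j * Real.cos (2 * Real.pi / n * j * i) := by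
  unfold psi nazc
  by_cases h0 : j = 0
  · simp [h0]
  · by_cases h1 : j < n / 2
    · have : ¬ (2 * j = n) := by omega
      simp [h0, h1, this]
    · have h2 : j = n / 2 := by omega
      by_cases h3 : n % 2 = 0
      · have : 2 * j = n := by omega
        rw [if_neg h0, if_neg h1, if_pos h2, if_pos h3, if_pos (Or.inr this), one_mul]
      · have : ¬ (j = 0 ∨ 2 * j = n) := by omega
        rw [if_neg h0, if_neg h1, if_pos h2, if_neg h3, if_neg this]

lemma psi_sin (n j i : ℕ) (hj : n / 2 < j) :
    psi n j i = Real.sqrt 2 * Real.sin (2 * Real.pi / n * j * i) := by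
  unfold psi
  rw [if_neg (by omega), if_neg (by omega), if_neg (by omega)]

lemma naz_dvd_sub (n j k : ℕ) (hj : j < n) (hk : k < n) : (n : ℤ) ∣ (j : ℤ) - k ↔ j = k := by
  constructor
  · intro h
    have := Int.eq_zero_of_abs_lt_dvd h (by rw [abs_lt]; omega)
    omega
  · rintro rfl; simp

lemma psi_orth (n : ℕ) (hn : 2 ≤ n) (j k : ℕ) (hj : j < n) (hk : k < n) :
    ∑ i ∈ Finset.range n, psi n j i * psi n k i = if j = k then (n : ℝ) else 0 := by
  have hn0 : 0 < n := by omega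
  rcases le_or_gt j (n / 2) with h1 | h1 <;> rcases le_or_gt k (n / 2) with h2 | h2
  · simp only [psi_cos n _ _ h1, psi_cos n _ _ h2]
    have : ∀ i : ℕ, nazc n j * Real.cos (2 * Real.pi / n * j * i) * (nazc n k * Real.cos (2 * Real.pi / n * k * i))
      = (nazc n j * nazc n k) * (Real.cos (2 * Real.pi / n * j * i) * Real.cos (2 * Real.pi / n * k * i)) := by
      intro i; ring
    simp only [this]
    rw [← Finset.mul_sum, naz_cc n hn0]
    simp only [naz_dvd_sub n j k hj hk]
    by_cases e : j = k
    · subst e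
      unfold nazc
      by_cases h : j = 0 ∨ 2 * j = n
      · have : (n : ℤ) ∣ (j : ℤ) + j := by
          rcases h with h | h
          · simp [h]
          · exact ⟨1, by omega⟩
        simp only [h, this, if_true]; ring
      · have : ¬ (n : ℤ) ∣ (j : ℤ) + j := by
          intro hd
          have := Int.le_of_dvd (by omega) hd
          omega
        simp only [h, this, if_true, if_false]
        rw [Real.mul_self_sqrt (by norm_num)]; ring
    · have : ¬ (n : ℤ) ∣ (j : ℤ) + k := by
        intro hd
        have := Int.le_of_dvd (by omega) hd
        omega
      simp [e, this]
  · simp only [psi_cos n _ _ h1, psi_sin n _ _ h2]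
    have : ∀ i : ℕ, nazc n j * Real.cos (2 * Real.pi / n * j * i) * (Real.sqrt 2 * Real.sin (2 * Real.pi / n * k * i))
      = (nazc n j * Real.sqrt 2) * (Real.sin (2 * Real.pi / n * k * i) * Real.cos (2 * Real.pi / n * j * i)) := by
      intro i; ring
    simp only [this]
    rw [← Finset.mul_sum, naz_sc n hn0, if_neg (by omega), mul_zero]
  · simp only [psi_cos n _ _ h2, psi_sin n _ _ h1]
    have : ∀ i : ℕ, (Real.sqrt 2 * Real.sin (2 * Real.pi / n * j * i)) * (nazc n k * Real.cos (2 * Real.pi / n * k * i))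
      = (nazc n k * Real.sqrt 2) * (Real.sin (2 * Real.pi / n * j * i) * Real.cos (2 * Real.pi / n * k * i)) := by
      intro i; ring
    simp only [this]
    rw [← Finset.mul_sum, naz_sc n hn0, if_neg (by omega), mul_zero]
  · simp only [psi_sin n _ _ h2, psi_sin n _ _ h1]
    have : ∀ i : ℕ, (Real.sqrt 2 * Real.sin (2 * Real.pi / n * j * i)) * (Real.sqrt 2 * Real.sin (2 * Real.pi / n * k * i))
      = 2 * (Real.sin (2 * Real.pi / n * j * i) * Real.sin (2 * Real.pi / n * k * i)) := by
      intro i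
      have := Real.mul_self_sqrt (show (0:ℝ) ≤ 2 by norm_num)
      linear_combination (Real.sin (2 * Real.pi / n * j * i) * Real.sin (2 * Real.pi / n * k * i)) * this
    simp only [this]
    rw [← Finset.mul_sum, naz_ss n hn0]
    simp only [naz_dvd_sub n j k hj hk]
    have : ¬ (n : ℤ) ∣ (j : ℤ) + k := by
      rintro ⟨q, hq⟩
      have q1 : 1 < q := by
        by_contra hcon
        have : (n : ℤ) * q ≤ n * 1 := by
          apply mul_le_mul_of_nonneg_left <;> omega
        omega
      have : (n : ℤ) * 2 ≤ n * q := by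
        apply mul_le_mul_of_nonneg_left <;> omega
      omega
    simp only [this, if_false]
    split_ifs <;> ring

/-- reflection of frequencies -/
lemma naz_refl (n j i : ℕ) (hn : 0 < n) (hj : j ≤ n) :
    Real.cos (2 * Real.pi / n * j * i) = Real.cos (2 * Real.pi / n * (n - j : ℕ) * i) ∧
    Real.sin (2 * Real.pi / n * j * i) = - Real.sin (2 * Real.pi / n * (n - j : ℕ) * i) := by
  have hn' : (n : ℝ) ≠ 0 := by exact_mod_cast hn.ne'
  have : 2 * Real.pi / n * (n - j : ℕ) * i = i * (2 * Real.pi) - 2 * Real.pi / n * j * i := by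
    rw [Nat.cast_sub hj]; field_simp
  rw [this, Real.cos_nat_mul_two_pi_sub, Real.sin_nat_mul_two_pi_sub]
  simp

lemma naz_cos_psi (n j : ℕ) (hn : 2 ≤ n) (h0 : 0 < j) (hj : j < n) :
    ∃ k, k < n ∧ ∃ c : ℝ, ∀ i : ℕ, Real.cos (2 * Real.pi / n * j * i) = c * psi n k i := by
  rcases le_or_gt j (n / 2) with h1 | h1
  · refine ⟨j, hj, (nazc n j)⁻¹, fun i => ?_⟩
    rw [psi_cos n j i h1, inv_mul_cancel_left₀ (nazc_ne n j)]
  · refine ⟨n - j, by omega, (nazc n (n - j))⁻¹, fun i => ?_⟩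
    rw [psi_cos n (n - j) i (by omega), inv_mul_cancel_left₀ (nazc_ne n _)]
    exact (naz_refl n j i (by omega) hj.le).1

lemma naz_sin_psi (n j : ℕ) (hn : 2 ≤ n) (h0 : 0 < j) (hj : j < n) :
    ∃ k, k < n ∧ ∃ c : ℝ, ∀ i : ℕ, Real.sin (2 * Real.pi / n * j * i) = c * psi n k i := by
  have s2 : Real.sqrt 2 ≠ 0 := by simp
  rcases le_or_gt j (n / 2) with h1 | h1
  · by_cases h2 : 2 * j = n
    · refine ⟨j, hj, 0, fun i => ?_⟩
      have hn' : (n : ℝ) ≠ 0 := by positivity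
      have : 2 * Real.pi / n * j * i = i * Real.pi := by
        have : (n : ℝ) = 2 * j := by exact_mod_cast h2.symm
        have hj0 : (j : ℝ) ≠ 0 := by positivity
        rw [this]; field_simp
      rw [this, Real.sin_nat_mul_pi, zero_mul]
    · refine ⟨n - j, by omega, -(Real.sqrt 2)⁻¹, fun i => ?_⟩
      rw [psi_sin n (n - j) i (by omega), neg_mul, inv_mul_cancel_left₀ s2]
      exact (naz_refl n j i (by omega) hj.le).2
  · refine ⟨j, hj, (Real.sqrt 2)⁻¹, fun i => ?_⟩
    rw [psi_sin n j i h1, inv_mul_cancel_left₀ s2]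

lemma l1psi_pos (n : ℕ) (hn : 2 ≤ n) (j : ℕ) (hj : j < n) : 0 < l1psi n j := by
  have hn' : (0 : ℝ) < n := by positivity
  unfold l1psi
  have h := psi_orth n hn j j hj hj
  rw [if_pos rfl] at h
  have h0 : 0 ≤ ∑ i ∈ Finset.range n, |psi n j i| := Finset.sum_nonneg fun _ _ => abs_nonneg _
  rcases h0.eq_or_lt with e | e
  · exfalso
    have := (Finset.sum_eq_zero_iff_of_nonneg (fun _ _ => abs_nonneg _)).1 e.symm
    have : ∑ i ∈ Finset.range n, psi n j i * psi n j i = 0 := by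
      apply Finset.sum_eq_zero
      intro i hi
      rw [abs_eq_zero.1 (this i hi), zero_mul]
    linarith
  · positivity

lemma beta_facts (n : ℕ) (hn : 2 ≤ n) :
    0 < beta n ∧ beta n ≤ 1 ∧ ∀ j < n, beta n ≤ l1psi n j := by
  have hset : {x | ∃ j < n, x = l1psi n j} = (l1psi n) '' (Set.Iio n) := by
    ext x; simp only [Set.mem_ofPred_eq, Set.mem_image, Set.mem_Iio]
    exact ⟨fun ⟨j, h, e⟩ => ⟨j, h, e.symm⟩, fun ⟨j, h, e⟩ => ⟨j, h, e.symm⟩⟩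
  have hfin : ({x | ∃ j < n, x = l1psi n j}).Finite := by
    rw [hset]; exact (Set.finite_Iio n).image _
  have hne : ({x | ∃ j < n, x = l1psi n j}).Nonempty := ⟨_, 0, by omega, rfl⟩
  have hle : ∀ j < n, beta n ≤ l1psi n j := fun j hj => csInf_le hfin.bddBelow ⟨j, hj, rfl⟩
  refine ⟨?_, ?_, hle⟩
  · obtain ⟨j, hj, e⟩ := hne.csInf_mem hfin
    unfold beta
    rw [e]
    exact l1psi_pos n hn j hj
  · refine (hle 0 (by omega)).trans (le_of_eq ?_)
    have hn' : (n : ℝ) ≠ 0 := by positivity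
    simp [l1psi, psi, hn']

lemma dft_norm_sq {n : ℕ} (a : Fin n → ℝ) (j : Fin n) :
    ‖dft a j‖ ^ 2 = (∑ i : Fin n, a i * Real.cos (2 * Real.pi / n * (j : ℕ) * (i : ℕ))) ^ 2
      + (∑ i : Fin n, a i * Real.sin (2 * Real.pi / n * (j : ℕ) * (i : ℕ))) ^ 2 := by
  have e : ∀ i : Fin n, (a i : ℂ) *
      Complex.exp (-(2 * Real.pi * Complex.I * ((i : ℕ) : ℂ) * ((j : ℕ) : ℂ)) / (n : ℂ))
      = (a i : ℂ) * Complex.exp ((-(2 * Real.pi / n * (j : ℕ) * (i : ℕ)) : ℝ) * Complex.I) := by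
    intro i
    congr 2
    push_cast; ring
  have hre : (dft a j).re = ∑ i : Fin n, a i * Real.cos (2 * Real.pi / n * (j : ℕ) * (i : ℕ)) := by
    unfold dft
    simp only [e]
    rw [Complex.re_sum]
    simp only [Complex.re_ofReal_mul, Complex.exp_ofReal_mul_I_re, Real.cos_neg]
  have him : (dft a j).im = - ∑ i : Fin n, a i * Real.sin (2 * Real.pi / n * (j : ℕ) * (i : ℕ)) := by
    unfold dft
    simp only [e]
    rw [Complex.im_sum]
    simp only [Complex.im_ofReal_mul, Complex.exp_ofReal_mul_I_im, Real.sin_neg, mul_neg,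
      Finset.sum_neg_distrib]
  rw [← Complex.normSq_eq_norm_sq, Complex.normSq_apply, hre, him]
  ring

lemma naz_orth_fin (n : ℕ) (hn : 2 ≤ n) (k l : Fin n) :
    (1 / (n : ℝ)) * ∑ i : Fin n, psi n k i * psi n l i = if k = l then 1 else 0 := by
  have hn' : (n : ℝ) ≠ 0 := by positivity
  have := psi_orth n hn k l k.2 l.2
  rw [Finset.sum_range] at this
  rw [this]
  simp only [Fin.ext_iff]
  split_ifs <;> simp [hn']

lemma naz_parseval (n : ℕ) (hn : 2 ≤ n) (c : Fin n → ℝ) :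
    (1 / (n : ℝ)) * ∑ i : Fin n, (∑ k : Fin n, c k * psi n k i) ^ 2 = ∑ k, c k ^ 2 := by
  calc _ = ∑ k : Fin n, ∑ l : Fin n, c k * c l * ((1 / (n : ℝ)) * ∑ i : Fin n, psi n k i * psi n l i) := by
        simp only [sq, Finset.mul_sum]
        rw [Finset.sum_comm]
        apply Finset.sum_congr rfl; intro k _
        rw [Finset.sum_comm]
        apply Finset.sum_congr rfl; intro l _
        rw [Finset.sum_mul, Finset.mul_sum]
        apply Finset.sum_congr rfl; intro i _
        ring
    _ = _ := by
        simp only [naz_orth_fin n hn]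
        simp [sq]

lemma naz_bessel (n : ℕ) (hn : 2 ≤ n) (x : Fin n → ℝ) :
    ∑ k : Fin n, ((1 / (n : ℝ)) * ∑ i : Fin n, x i * psi n k i) ^ 2
      ≤ (1 / (n : ℝ)) * ∑ i : Fin n, x i ^ 2 := by
  set c : Fin n → ℝ := fun k => (1 / (n : ℝ)) * ∑ i : Fin n, x i * psi n k i with hc
  have hp := naz_parseval n hn c
  have hx : (1 / (n : ℝ)) * ∑ i : Fin n, x i * (∑ k : Fin n, c k * psi n k i) = ∑ k, c k ^ 2 := by
    have : ∀ k, c k ^ 2 = c k * ((1 / (n : ℝ)) * ∑ i : Fin n, x i * psi n k i) := fun k => by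
      rw [sq]
    simp only [this]
    simp only [Finset.mul_sum]
    rw [Finset.sum_comm]
    apply Finset.sum_congr rfl; intro k _
    apply Finset.sum_congr rfl; intro i _
    ring
  have h0 : 0 ≤ (1 / (n : ℝ)) * ∑ i : Fin n, (x i - ∑ k : Fin n, c k * psi n k i) ^ 2 := by
    have : 0 ≤ ∑ i : Fin n, (x i - ∑ k : Fin n, c k * psi n k i) ^ 2 :=
      Finset.sum_nonneg fun _ _ => sq_nonneg _
    positivity
  have e : (1 / (n : ℝ)) * ∑ i : Fin n, (x i - ∑ k : Fin n, c k * psi n k i) ^ 2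
      = (1 / (n : ℝ)) * ∑ i : Fin n, x i ^ 2
        - 2 * ((1 / (n : ℝ)) * ∑ i : Fin n, x i * (∑ k : Fin n, c k * psi n k i))
        + (1 / (n : ℝ)) * ∑ i : Fin n, (∑ k : Fin n, c k * psi n k i) ^ 2 := by
    simp only [sub_sq, Finset.sum_add_distrib, Finset.sum_sub_distrib, mul_assoc, ← Finset.mul_sum]
    ring
  rw [e, hx, hp] at h0
  linarith

lemma naz_aperture (n : ℕ) (hn : 2 ≤ n) (b : Fin n → ℝ) (hb : ∀ i, b i ∈ Set.Icc (0 : ℝ) 1) :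
    ∃ a : Fin n → ℝ, (∀ i, a i ∈ Set.Icc (0 : ℝ) 1) ∧ 1 / 6 ≤ transmissivity a ∧
      transmissivity a ≤ 1 / 2 ∧ ∀ j : Fin n, (j : ℕ) ≠ 0 →
        ‖dft b j‖ ^ 2 ≤ 4 * Mnaz n ^ 2 * (transmissivity b * (1 - transmissivity b))
          * ‖dft a j‖ ^ 2 := by
  obtain ⟨hβ, hβ1, hβl⟩ := beta_facts n hn
  have hn0 : (0 : ℝ) < n := by positivity
  have hn' : (n : ℝ) ≠ 0 := hn0.ne'
  set w : ℝ := 1 / n with hw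
  have hwpos : 0 < w := by positivity
  have hwn : w * n = 1 := by rw [hw]; field_simp
  set r := transmissivity b with hr
  set x : Fin n → ℝ := fun i => b i - r with hx
  have hrs : w * ∑ i, b i = r := by rw [hr, transmissivity]
  set V := r * (1 - r) with hV
  have hx2 : w * ∑ i, x i ^ 2 ≤ V := by
    have : w * ∑ i, x i ^ 2 = w * ∑ i, b i ^ 2 - 2 * r * (w * ∑ i, b i) + (w * n) * r ^ 2 := by
      simp only [hx, sub_sq, Finset.sum_add_distrib, Finset.sum_sub_distrib, ← Finset.sum_mul,
        ← Finset.mul_sum]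
      simp
      ring
    rw [this, hrs, hwn]
    have : w * ∑ i, b i ^ 2 ≤ w * ∑ i, b i := by
      gcongr with i
      nlinarith [(hb i).1, (hb i).2]
    rw [hrs] at this
    rw [hV]; nlinarith
  set y : Fin n → ℝ := fun k => w * ∑ i, x i * psi n k i with hy
  have hbes : ∑ k, y k ^ 2 ≤ V := (naz_bessel n hn x).trans hx2
  have hV0 : 0 ≤ V := le_trans (Finset.sum_nonneg fun _ _ => sq_nonneg _) hbes
  set N := Real.sqrt V with hN
  have hN2 : N ^ 2 = V := Real.sq_sqrt hV0
  have hsum1 : ∑ k, (y k / N) ^ 2 ≤ 1 := by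
    simp only [div_pow, ← Finset.sum_div, hN2]
    exact div_le_one_of_le₀ hbes hV0
  have hyN : ∀ k, y k ^ 2 = V * (y k / N) ^ 2 := by
    intro k
    rcases hV0.eq_or_lt with h | h
    · have : y k ^ 2 ≤ ∑ k, y k ^ 2 :=
        Finset.single_le_sum (f := fun k => y k ^ 2) (fun _ _ => sq_nonneg _) (Finset.mem_univ k)
      rw [← h]
      nlinarith [sq_nonneg (y k)]
    · rw [div_pow, hN2]; field_simp
  obtain ⟨F, hF⟩ := naz_main w hwpos (by simpa using hwn) (fun (k i : Fin n) => psi n k i) (beta n) hβ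
    (by
      intro k
      have := hβl k k.2
      rwa [l1psi, Finset.sum_range] at this)
    (fun c => (naz_parseval n hn c).le) (fun k => y k / N) hsum1
  have hpi := Real.pi_pos
  have hg : ∃ g : Fin n → ℝ, (∀ i, |g i| ≤ 1) ∧ ∑ i, g i ≤ 0 ∧
      ∀ k : Fin n, |y k / N| * (beta n ^ 2 / Real.pi) ≤ |w * ∑ i, g i * psi n k i| := by
    have hbd : ∀ i, |2 / Real.pi * Real.arctan (F i)| ≤ 1 := by
      intro i
      rw [abs_mul, abs_of_pos (by positivity : 0 < 2 / Real.pi), div_mul_eq_mul_div,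
        div_le_one hpi]
      have h1 := Real.arctan_lt_pi_div_two (F i)
      have h2 := Real.neg_pi_div_two_lt_arctan (F i)
      have : |Real.arctan (F i)| ≤ Real.pi / 2 := abs_le.2 ⟨by linarith, by linarith⟩
      linarith
    have hk : ∀ k : Fin n, |y k / N| * (beta n ^ 2 / Real.pi)
        ≤ |w * ∑ i, 2 / Real.pi * Real.arctan (F i) * psi n k i| := by
      intro k
      have e : w * ∑ i, 2 / Real.pi * Real.arctan (F i) * psi n k i
          = 2 / Real.pi * (w * ∑ i, Real.arctan (F i) * psi n k i) := by
        simp only [mul_assoc, ← Finset.mul_sum]; ring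
      rw [e, abs_mul, abs_of_pos (by positivity : 0 < 2 / Real.pi)]
      calc _ = 2 / Real.pi * (|y k / N| * beta n ^ 2 / 2) := by ring
        _ ≤ _ := by gcongr; exact hF k
    rcases le_total (∑ i, 2 / Real.pi * Real.arctan (F i)) 0 with h | h
    · exact ⟨_, hbd, h, hk⟩
    · refine ⟨fun i => -(2 / Real.pi * Real.arctan (F i)), fun i => by rw [abs_neg]; exact hbd i,
        by rw [Finset.sum_neg_distrib]; linarith, fun k => ?_⟩
      simp only [neg_mul, Finset.sum_neg_distrib, mul_neg, abs_neg]
      simpa only [neg_mul, Finset.sum_neg_distrib, mul_neg, abs_neg] using hk k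
  obtain ⟨g, hg1, hg0, hgk⟩ := hg
  have hMk : ∀ k : Fin n, y k ^ 2 ≤ 4 * Mnaz n ^ 2 * V * ((1 / 3) * (w * ∑ i, g i * psi n k i)) ^ 2 := by
    intro k
    have h := hgk k
    set T := w * ∑ i, g i * psi n k i
    have h2 : (|y k / N| * (beta n ^ 2 / Real.pi)) ^ 2 ≤ |T| ^ 2 :=
      pow_le_pow_left₀ (by positivity) h 2
    rw [mul_pow, sq_abs, sq_abs] at h2
    rw [hyN k]
    have hM : Mnaz n ^ 2 * (beta n ^ 2 / Real.pi) ^ 2 = 9 / 4 := by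
      unfold Mnaz; field_simp; norm_num
    calc V * (y k / N) ^ 2 = 4 * V / 9 * Mnaz n ^ 2 * ((y k / N) ^ 2 * (beta n ^ 2 / Real.pi) ^ 2) := by
          linear_combination (-4 / 9 * V * (y k / N) ^ 2) * hM
      _ ≤ 4 * V / 9 * Mnaz n ^ 2 * T ^ 2 := by gcongr
      _ = _ := by ring
  set a : Fin n → ℝ := fun i => 1 / 2 + g i / 3 with ha
  have hta : transmissivity a = 1 / 2 + (w * ∑ i, g i) / 3 := by
    rw [transmissivity]
    simp only [ha, Finset.sum_add_distrib, ← Finset.sum_div, Finset.sum_const, Finset.card_univ,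
      Fintype.card_fin, nsmul_eq_mul]
    rw [← hw]
    linear_combination (1 / 2) * hwn
  -- generic transfer for a test vector proportional to psi with zero sum
  have transfer : ∀ u : Fin n → ℝ, ∑ i, u i = 0 → (∃ k : Fin n, ∃ c : ℝ, ∀ i, u i = c * psi n k i) →
      (∑ i, b i * u i) ^ 2 ≤ 4 * Mnaz n ^ 2 * V * (∑ i, a i * u i) ^ 2 := by
    rintro u hu ⟨k, c, huc⟩
    have e1 : ∑ i, b i * u i = n * (c * y k) := by
      have : ∑ i, b i * u i = ∑ i, x i * u i := by
        simp only [hx, sub_mul, Finset.sum_sub_distrib, ← Finset.mul_sum, hu]; simp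
      rw [this]
      simp only [hy, huc, mul_left_comm _ c, ← Finset.mul_sum]
      rw [hw]; field_simp
    have e2 : ∑ i, a i * u i = n * (c * ((1 / 3) * (w * ∑ i, g i * psi n k i))) := by
      have : ∑ i, a i * u i = (1 / 3) * ∑ i, g i * u i := by
        simp only [ha, add_mul, Finset.sum_add_distrib, ← Finset.mul_sum, hu, div_mul_eq_mul_div,
          ← Finset.sum_div]
        ring
      rw [this]
      simp only [huc, mul_left_comm _ c, ← Finset.mul_sum]
      rw [hw]; field_simp
    rw [e1, e2]
    have := hMk k
    calc (n * (c * y k)) ^ 2 = n ^ 2 * c ^ 2 * y k ^ 2 := by ring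
      _ ≤ n ^ 2 * c ^ 2 * (4 * Mnaz n ^ 2 * V * ((1 / 3) * (w * ∑ i, g i * psi n k i)) ^ 2) := by
        gcongr
      _ = _ := by ring
  refine ⟨a, ?_, ?_, ?_, ?_⟩
  · intro i
    have := abs_le.1 (hg1 i)
    simp only [ha]
    constructor <;> linarith
  · rw [hta]
    have : -(n : ℝ) ≤ ∑ i, g i := by
      have : ∑ i : Fin n, (-1 : ℝ) ≤ ∑ i, g i :=
        Finset.sum_le_sum fun i _ => (abs_le.1 (hg1 i)).1
      simpa using this
    have := mul_le_mul_of_nonneg_left this hwpos.le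
    linarith
  · rw [hta]
    have := mul_nonpos_of_nonneg_of_nonpos hwpos.le hg0
    linarith
  · intro j hj
    have hj0 : 0 < (j : ℕ) := Nat.pos_of_ne_zero hj
    have hnd : ¬ (n : ℤ) ∣ ((j : ℕ) : ℤ) := by
      intro h
      have := Int.le_of_dvd (by omega) h
      have := j.2
      omega
    have hc := naz_sum_cos n (by omega) ((j : ℕ) : ℤ)
    have hs := naz_sum_sin n (by omega) ((j : ℕ) : ℤ)
    rw [if_neg hnd] at hc
    rw [Finset.sum_range] at hc hs
    rw [dft_norm_sq, dft_norm_sq, mul_add]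
    apply add_le_add
    · apply transfer (fun i => Real.cos (2 * Real.pi / n * (j : ℕ) * (i : ℕ)))
      · exact_mod_cast hc
      · obtain ⟨k, hk, c, h⟩ := naz_cos_psi n j hn hj0 j.2
        exact ⟨⟨k, hk⟩, c, fun i => h i⟩
    · apply transfer (fun i => Real.sin (2 * Real.pi / n * (j : ℕ) * (i : ℕ)))
      · exact_mod_cast hs
      · obtain ⟨k, hk, c, h⟩ := naz_sin_psi n j hn hj0 j.2
        exact ⟨⟨k, hk⟩, c, fun i => h i⟩

lemma transmissivity_mem {n : ℕ} (hn : 2 ≤ n) (a : Fin n → ℝ) (ha : ∀ i, a i ∈ Set.Icc (0 : ℝ) 1) :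
    transmissivity a ∈ Set.Icc (0 : ℝ) 1 := by
  have hn0 : (0 : ℝ) < n := by positivity
  unfold transmissivity
  constructor
  · have : 0 ≤ ∑ i, a i := Finset.sum_nonneg fun i _ => (ha i).1
    positivity
  · have : ∑ i, a i ≤ ∑ i : Fin n, (1 : ℝ) := Finset.sum_le_sum fun i _ => (ha i).2
    simp at this
    rw [one_div, inv_mul_le_one₀ hn0]
    exact this

lemma naz_attained (n : ℕ) (hn : 2 ≤ n) (t W J : ℝ) (ht : 0 < t) (hW : 0 < W) (hJ : 0 < J)
    (d : Fin n → ℝ) (hd : ∀ i, 0 < d i) :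
    ∃ b : Fin n → ℝ, (∀ i, b i ∈ Set.Icc (0 : ℝ) 1) ∧ lmmse n t W J d b ≤ lmmseOpt n t W J d := by
  have hn0 : (0 : ℝ) < n := by positivity
  have hK : IsCompact (Set.pi Set.univ (fun _ : Fin n => Set.Icc (0 : ℝ) 1)) :=
    isCompact_univ_pi fun _ => isCompact_Icc
  have hne : (Set.pi Set.univ (fun _ : Fin n => Set.Icc (0 : ℝ) 1)).Nonempty :=
    ⟨fun _ => 0, fun _ _ => by simp⟩
  have hcont : ContinuousOn (lmmse n t W J d) (Set.pi Set.univ (fun _ : Fin n => Set.Icc (0 : ℝ) 1)) := by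
    have hT : Continuous (fun a : Fin n → ℝ => transmissivity a) := by
      unfold transmissivity; fun_prop
    have hD : ∀ j, Continuous (fun a : Fin n → ℝ => dft a j) := by
      intro j; unfold dft; fun_prop
    unfold lmmse
    apply continuousOn_finsetSum
    intro i _
    have hpos : ∀ a ∈ (Set.pi Set.univ (fun _ : Fin n => Set.Icc (0 : ℝ) 1)),
        0 < n * (W + J * transmissivity a) := by
      intro a ha
      have := (transmissivity_mem hn a (fun i => ha i trivial)).1
      positivity
    apply ContinuousOn.div continuousOn_const
    · apply ContinuousOn.add continuousOn_const
      apply ContinuousOn.mul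
      · apply ContinuousOn.div continuousOn_const
        · exact (continuous_const.mul (continuous_const.add (continuous_const.mul hT))).continuousOn
        · exact fun a ha => (hpos a ha).ne'
      · exact ((hD i).norm.pow 2).continuousOn
    · intro a ha
      have h1 := hpos a ha
      have h2 := hd i
      positivity
  obtain ⟨b, hb, hmin⟩ := hK.exists_isMinOn hne hcont
  refine ⟨b, fun i => hb i trivial, ?_⟩
  apply le_csInf
  · exact ⟨_, b, fun i => hb i trivial, rfl⟩
  · rintro m ⟨a, ha, rfl⟩
    exact hmin (show a ∈ _ from fun i _ => ha i)

lemma dft_zero_sq {n : ℕ} (hn : 2 ≤ n) (a : Fin n → ℝ) (j : Fin n) (hj : (j : ℕ) = 0) :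
    ‖dft a j‖ ^ 2 = (n : ℝ) ^ 2 * transmissivity a ^ 2 := by
  have hn0 : (n : ℝ) ≠ 0 := by positivity
  rw [dft_norm_sq, transmissivity, hj]
  simp
  field_simp

/-- Prop. 4: for all `n ≥ 2`, `t, W, J > 0` and any positive scene prior `d`, there is an
aperture `a ∈ [0,1]^n` which, with exposure time `2M(n)² t`, matches the optimal LMMSE
at exposure time `t`. -/
theorem nazarov_aperture_factor
    (n : ℕ) (hn : 2 ≤ n) (t W J : ℝ) (ht : 0 < t) (hW : 0 < W) (hJ : 0 < J)
    (d : Fin n → ℝ) (hd : ∀ i, 0 < d i) :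
    ∃ a : Fin n → ℝ, (∀ i, a i ∈ Set.Icc (0 : ℝ) 1) ∧
      lmmse n (2 * Mnaz n ^ 2 * t) W J d a ≤ lmmseOpt n t W J d := by
  obtain ⟨b, hb, hbo⟩ := naz_attained n hn t W J ht hW hJ d hd
  obtain ⟨a, ha, hr1, hr2, hdft⟩ := naz_aperture n hn b hb
  refine ⟨a, ha, le_trans ?_ hbo⟩
  have hn0 : (0 : ℝ) < n := by positivity
  obtain ⟨hβ, hβ1, -⟩ := beta_facts n hn
  have hq := transmissivity_mem hn b hb
  have hM : 18 ≤ Mnaz n ^ 2 := by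
    have h1 : 9 / 2 ≤ Mnaz n := by
      unfold Mnaz
      rw [le_div_iff₀ (by positivity)]
      have : beta n ^ 2 ≤ 1 := pow_le_one₀ hβ.le hβ1
      have := Real.pi_gt_three
      nlinarith
    nlinarith
  set p := transmissivity a with hp
  set q := transmissivity b with hq'
  obtain ⟨hq0, hq1⟩ := hq
  unfold lmmse
  rw [← hp, ← hq']
  have hA : 0 < W + J * p := by have : 0 < p := by linarith
                                positivity
  have hB : 0 < W + J * q := by positivity
  apply Finset.sum_le_sum
  intro i _
  have hdi := hd i
  apply one_div_le_one_div_of_le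
  · positivity
  · gcongr 1 / d i + ?_
    have main : ‖dft b i‖ ^ 2 * (W + J * p) ≤ 2 * Mnaz n ^ 2 * ‖dft a i‖ ^ 2 * (W + J * q) := by
      by_cases hi : (i : ℕ) = 0
      · rw [dft_zero_sq hn a i hi, dft_zero_sq hn b i hi, ← hp, ← hq']
        have h1 : q ^ 2 * (W + J * p) ≤ W + J * q := by
          have : q ^ 2 ≤ q := by nlinarith
          have : q ^ 2 * p ≤ q := by nlinarith [sq_nonneg q]
          nlinarith
        have h2 : 1 ≤ 2 * Mnaz n ^ 2 * p ^ 2 := by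
          have : 1 / 36 ≤ p ^ 2 := by nlinarith
          nlinarith
        calc (n : ℝ) ^ 2 * q ^ 2 * (W + J * p) = (n : ℝ) ^ 2 * (q ^ 2 * (W + J * p)) := by ring
          _ ≤ (n : ℝ) ^ 2 * (1 * (W + J * q)) := by rw [one_mul]; gcongr
          _ ≤ (n : ℝ) ^ 2 * ((2 * Mnaz n ^ 2 * p ^ 2) * (W + J * q)) := by gcongr
          _ = _ := by ring
      · have h := hdft i hi
        have h1 : 2 * (q * (1 - q)) * (W + J * p) ≤ W + J * q := by
          have e1 : 2 * (q * (1 - q)) ≤ 1 := by nlinarith [sq_nonneg (q - 1 / 2)]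
          have e2 : 2 * (q * (1 - q)) * p ≤ q := by
            have : q * (1 - q) ≤ q := by nlinarith
            have : 0 ≤ q * (1 - q) := mul_nonneg hq0 (by linarith)
            nlinarith
          nlinarith
        calc ‖dft b i‖ ^ 2 * (W + J * p)
            ≤ (4 * Mnaz n ^ 2 * (q * (1 - q)) * ‖dft a i‖ ^ 2) * (W + J * p) := by gcongr
          _ = 2 * Mnaz n ^ 2 * ‖dft a i‖ ^ 2 * (2 * (q * (1 - q)) * (W + J * p)) := by ring
          _ ≤ _ := by gcongr
    rw [div_mul_eq_mul_div, div_mul_eq_mul_div, div_le_div_iff₀ (by positivity) (by positivity)]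
    calc t * ‖dft b i‖ ^ 2 * (n * (W + J * p)) = t * n * (‖dft b i‖ ^ 2 * (W + J * p)) := by ring
      _ ≤ t * n * (2 * Mnaz n ^ 2 * ‖dft a i‖ ^ 2 * (W + J * q)) := by gcongr
      _ = _ := by ring
end

section
/- For every n ≥ 1 and every j with 0 ≤ j < n, the normalized ℓ¹ norm of the basis vector ψ_j satisfies (1/n)∑_{i=0}^{n−1} |ψ_j(i)| ≥ 1/√2; consequently β(n) ≥ 1/√2 for all n ≥ 1. -/
theorem aux_cos_sum (n j : ℕ) (hj0 : 0 < j) (hj : j < n) (h2 : 2 * j ≠ n) :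
    ∑ i ∈ Finset.range n, Real.cos (2 * (2 * Real.pi / n * j * i)) = 0 := by
  have hn0 : (n : ℝ) ≠ 0 := by
    have : n ≠ 0 := by omega
    exact_mod_cast this
  set t : ℝ := 2 * Real.pi / n * j with ht
  have htn : t * n = 2 * Real.pi * j := by rw [ht]; field_simp
  have hs : Real.sin t ≠ 0 := by
    intro h
    obtain ⟨k, hk⟩ := Real.sin_eq_zero_iff.mp h
    have h1 : (k : ℝ) * n = 2 * j := by
      have : Real.pi * ((k : ℝ) * n) = Real.pi * (2 * j) := by
        rw [← hk] at htn; linarith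
      exact mul_left_cancel₀ Real.pi_ne_zero this
    have h3 : k * (n : ℤ) = 2 * j := by exact_mod_cast h1
    have hk0 : 0 < k := by
      by_contra hc
      push Not at hc
      have : k * (n : ℤ) ≤ 0 := mul_nonpos_of_nonpos_of_nonneg hc (by positivity)
      omega
    have hk2 : k < 2 := by
      by_contra hc
      push Not at hc
      have : 2 * (n : ℤ) ≤ k * n := mul_le_mul_of_nonneg_right hc (by positivity)
      omega
    have : k = 1 := by omega
    subst this
    omega
  have tel : ∀ m : ℕ, 2 * Real.sin t * ∑ i ∈ Finset.range m, Real.cos (2 * (t * i))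
      = Real.sin (2 * (t * m) - t) + Real.sin t := by
    intro m
    induction m with
    | zero => simp
    | succ m ih =>
      rw [Finset.sum_range_succ, mul_add, ih]
      have e : 2 * (t * ((m + 1 : ℕ) : ℝ)) - t = 2 * (t * m) + t := by push_cast; ring
      rw [e, Real.sin_add, Real.sin_sub]
      ring
  have h := tel n
  have e : 2 * (t * n) - t = -t + ((2 * j : ℕ) : ℝ) * (2 * Real.pi) := by
    rw [htn]; push_cast; ring
  rw [e, Real.sin_add_nat_mul_two_pi, Real.sin_neg, neg_add_cancel] at h
  rcases mul_eq_zero.mp h with h | h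
  · exact absurd (by linarith) hs
  · exact h

theorem aux_sq_sum (n j : ℕ) (hj : j < n) : ∑ i ∈ Finset.range n, (psi n j i) ^ 2 = n := by
  have s2 : Real.sqrt 2 ^ 2 = 2 := Real.sq_sqrt (by norm_num)
  have hc : 0 < j → 2 * j ≠ n →
      ∑ i ∈ Finset.range n, (Real.sqrt 2 * Real.cos (2 * Real.pi / n * j * i)) ^ 2 = n := by
    intro h0 h2
    have := aux_cos_sum n j h0 hj h2
    calc _ = ∑ i ∈ Finset.range n, (1 + Real.cos (2 * (2 * Real.pi / n * j * i))) := by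
          refine Finset.sum_congr rfl fun i _ => ?_
          rw [mul_pow, s2, Real.cos_two_mul]; ring
      _ = n := by rw [Finset.sum_add_distrib, this]; simp
  have hsn : 0 < j → 2 * j ≠ n →
      ∑ i ∈ Finset.range n, (Real.sqrt 2 * Real.sin (2 * Real.pi / n * j * i)) ^ 2 = n := by
    intro h0 h2
    have := aux_cos_sum n j h0 hj h2
    calc _ = ∑ i ∈ Finset.range n, (1 - Real.cos (2 * (2 * Real.pi / n * j * i))) := by
          refine Finset.sum_congr rfl fun i _ => ?_
          rw [mul_pow, s2, Real.cos_two_mul, Real.sin_sq]; ring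
      _ = n := by rw [Finset.sum_sub_distrib, this]; simp
  unfold psi
  split_ifs with h1 h2 h3 h4
  · simp
  · exact hc (by omega) (by omega)
  · have h2j : 2 * j = n := by omega
    have hn0 : (n : ℝ) ≠ 0 := by
      have : n ≠ 0 := by omega
      exact_mod_cast this
    have : ∀ i ∈ Finset.range n, Real.cos (2 * Real.pi / n * j * i) ^ 2 = 1 := by
      intro i _
      have e : 2 * Real.pi / n * j * i = i * Real.pi := by
        have : (2 * j : ℝ) = n := by exact_mod_cast h2j
        field_simp
        rw [← this]
      rw [e, Real.cos_nat_mul_pi, ← pow_mul, mul_comm, pow_mul]; simp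
    rw [Finset.sum_congr rfl this]; simp
  · exact hc (by omega) (by omega)
  · exact hsn (by omega) (by omega)

theorem aux_abs_le (n j i : ℕ) : |psi n j i| ≤ Real.sqrt 2 := by
  have h1 : (1 : ℝ) ≤ Real.sqrt 2 := Real.one_le_sqrt.mpr (by norm_num)
  have h0 : 0 ≤ Real.sqrt 2 := Real.sqrt_nonneg 2
  unfold psi
  split_ifs
  · simpa using h1
  · rw [abs_mul, abs_of_nonneg h0]
    exact mul_le_of_le_one_right h0 (Real.abs_cos_le_one _)
  · exact (Real.abs_cos_le_one _).trans h1
  · rw [abs_mul, abs_of_nonneg h0]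
    exact mul_le_of_le_one_right h0 (Real.abs_cos_le_one _)
  · rw [abs_mul, abs_of_nonneg h0]
    exact mul_le_of_le_one_right h0 (Real.abs_sin_le_one _)

/-- Each real DFT basis vector has normalized ℓ¹ norm at least `1/√2`; consequently
`β(n) ≥ 1/√2` for all `n ≥ 1`. -/
theorem l1psi_ge_inv_sqrt_two (n : ℕ) (hn : 1 ≤ n) :
    (∀ j < n, 1 / Real.sqrt 2 ≤ l1psi n j) ∧ 1 / Real.sqrt 2 ≤ beta n := by
  have key : ∀ j < n, 1 / Real.sqrt 2 ≤ l1psi n j := by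
    intro j hj
    have hn0 : (0 : ℝ) < n := by exact_mod_cast hn
    have hs : 0 < Real.sqrt 2 := by positivity
    have h : (n : ℝ) ≤ (∑ i ∈ Finset.range n, |psi n j i|) * Real.sqrt 2 := by
      rw [← aux_sq_sum n j hj, Finset.sum_mul]
      refine Finset.sum_le_sum fun i _ => ?_
      rw [← sq_abs, sq]
      exact mul_le_mul_of_nonneg_left (aux_abs_le n j i) (abs_nonneg _)
    unfold l1psi
    rw [one_div_mul_eq_div, div_le_div_iff₀ hs hn0]
    linarith
  refine ⟨key, le_csInf ⟨_, 0, hn, rfl⟩ ?_⟩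
  rintro x ⟨j, hj, rfl⟩
  exact key j hj
end

section
/- As p tends to infinity over the primes, β(p) converges to 2√2/π. That is, for every ε > 0 there exists N such that for every prime p > N, |β(p) − 2√2/π| < ε. -/
open Filter Topology in
theorem bt_reindex (p c d : ℕ) (hp : 0 < p) (hc : Nat.Coprime p c) (g : ℕ → ℝ)
    (hg : ∀ i, g (i + p) = g i) :
    ∑ i ∈ Finset.range p, g (c * i + d) = ∑ i ∈ Finset.range p, g i := by
  have hper : Function.Periodic g p := hg
  have hmaps : Set.MapsTo (fun i => (c * i + d) % p) (Finset.range p : Finset ℕ)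
      (Finset.range p : Finset ℕ) := by
    intro i _
    simpa using Nat.mod_lt _ hp
  have hinj : Set.InjOn (fun i => (c * i + d) % p) (Finset.range p : Finset ℕ) := by
    intro a ha b hb hab
    have h1 : c * a + d ≡ c * b + d [MOD p] := hab
    have h2 : c * a ≡ c * b [MOD p] := Nat.ModEq.add_right_cancel' d h1
    have h3 : a ≡ b [MOD p] := Nat.ModEq.cancel_left_of_coprime hc h2
    exact Nat.ModEq.eq_of_lt_of_lt h3 (by simpa using ha) (by simpa using hb)
  refine Finset.sum_nbij (fun i => (c * i + d) % p) hmaps hinj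
    (Finset.surjOn_of_injOn_of_card_le _ hmaps hinj le_rfl) ?_
  intro i _
  exact (hper.map_mod_nat _).symm

theorem bt_theta (p : ℕ) (hp : 2 ≤ p) : 0 < Real.sin (Real.pi / (2 * p)) := by
  have hp' : (2 : ℝ) ≤ p := by exact_mod_cast hp
  apply Real.sin_pos_of_pos_of_lt_pi
  · positivity
  · rw [div_lt_iff₀ (by positivity)]
    nlinarith [Real.pi_pos]

theorem bt_sin_sum (p : ℕ) (hp : 2 ≤ p) :
    ∑ i ∈ Finset.range p, |Real.sin (Real.pi / p * i)|
      = Real.cos (Real.pi / (2 * p)) / Real.sin (Real.pi / (2 * p)) := by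
  have hp' : (2 : ℝ) ≤ p := by exact_mod_cast hp
  have hs := bt_theta p hp
  set θ := Real.pi / (2 * p) with hθ
  have hpi : Real.pi = 2 * p * θ := by rw [hθ]; field_simp
  rw [eq_div_iff hs.ne', Finset.sum_mul]
  have key : ∀ i ∈ Finset.range p, |Real.sin (Real.pi / p * i)| * Real.sin θ
      = (-Real.cos ((2 * ((i + 1 : ℕ) : ℝ) - 1) * θ) / 2)
        - (-Real.cos ((2 * (i : ℝ) - 1) * θ) / 2) := by
    intro i hi
    have hi' : (i : ℝ) ≤ p := by exact_mod_cast (Finset.mem_range.mp hi).le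
    have e : Real.pi / p * i = 2 * i * θ := by rw [hθ]; field_simp
    rw [abs_of_nonneg, e]
    · have e1 : (2 * ((i + 1 : ℕ) : ℝ) - 1) * θ = 2 * i * θ + θ := by push_cast; ring
      have e2 : (2 * (i : ℝ) - 1) * θ = 2 * i * θ - θ := by ring
      rw [e1, e2, Real.cos_add, Real.cos_sub]; ring
    · apply Real.sin_nonneg_of_nonneg_of_le_pi
      · have := Real.pi_pos; positivity
      · rw [div_mul_eq_mul_div, div_le_iff₀ (by positivity)]
        exact mul_le_mul_of_nonneg_left hi' Real.pi_pos.le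
  rw [Finset.sum_congr rfl key,
    Finset.sum_range_sub (fun i : ℕ => -Real.cos ((2 * (i : ℝ) - 1) * θ) / 2)]
  have e1 : (2 * (p : ℝ) - 1) * θ = Real.pi - θ := by rw [hpi]; ring
  have e2 : (2 * ((0 : ℕ) : ℝ) - 1) * θ = -θ := by push_cast; ring
  rw [e1, e2, Real.cos_pi_sub, Real.cos_neg]; ring

theorem bt_cos_sum (p : ℕ) (hp : 2 ≤ p) (hodd : Odd p) :
    ∑ i ∈ Finset.range p, |Real.cos (Real.pi / p * i)|
      = 1 / Real.sin (Real.pi / (2 * p)) := by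
  have hp' : (2 : ℝ) ≤ p := by exact_mod_cast hp
  obtain ⟨m, hm⟩ := hodd
  have hm' : (p : ℝ) = 2 * m + 1 := by exact_mod_cast hm
  rw [← bt_reindex p 1 (m + 1) (by omega) (by simp) (fun i => |Real.cos (Real.pi / p * i)|)]
  swap
  · intro i
    have : Real.pi / p * ((i + p : ℕ) : ℝ) = Real.pi / p * i + Real.pi := by
      push_cast; field_simp
    simp only [this, Real.cos_add_pi, abs_neg]
  have hs := bt_theta p hp
  set θ := Real.pi / (2 * p) with hθ
  have hpi : Real.pi = 2 * p * θ := by rw [hθ]; field_simp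
  have hθ0 : 0 < θ := by have := Real.pi_pos; positivity
  rw [eq_div_iff hs.ne', Finset.sum_mul]
  have key : ∀ i ∈ Finset.range p, |Real.cos (Real.pi / p * ((1 * i + (m + 1) : ℕ) : ℝ))| * Real.sin θ
      = (-Real.cos (2 * ((i + 1 : ℕ) : ℝ) * θ) / 2)
        - (-Real.cos (2 * (i : ℝ) * θ) / 2) := by
    intro i hi
    have hi' : (i : ℝ) + 1 ≤ p := by exact_mod_cast (Finset.mem_range.mp hi)
    have e : Real.pi / p * ((1 * i + (m + 1) : ℕ) : ℝ) = (2 * i * θ + θ) + Real.pi / 2 := by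
      rw [hθ]; push_cast; field_simp; rw [hm']; ring
    rw [e, Real.cos_add_pi_div_two, abs_neg, abs_of_nonneg]
    · have e1 : 2 * ((i + 1 : ℕ) : ℝ) * θ = (2 * i * θ + θ) + θ := by push_cast; ring
      have e2 : 2 * (i : ℝ) * θ = (2 * i * θ + θ) - θ := by ring
      have c1 := Real.cos_add (2 * i * θ + θ) θ
      have c2 := Real.cos_sub (2 * i * θ + θ) θ
      rw [← e1] at c1
      rw [← e2] at c2
      rw [c1, c2]; ring
    · apply Real.sin_nonneg_of_nonneg_of_le_pi
      · positivity
      · nlinarith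
  rw [Finset.sum_congr rfl key,
    Finset.sum_range_sub (fun i : ℕ => -Real.cos (2 * (i : ℝ) * θ) / 2)]
  rw [← hpi]; norm_num

theorem bt_cos_sum' (p j : ℕ) (hp : 2 ≤ p) (hodd : Odd p) (hj : Nat.Coprime p j) :
    ∑ i ∈ Finset.range p, |Real.cos (2 * Real.pi / p * j * i)|
      = 1 / Real.sin (Real.pi / (2 * p)) := by
  have hp' : (2 : ℝ) ≤ p := by exact_mod_cast hp
  rw [← bt_cos_sum p hp hodd,
    ← bt_reindex p (2 * j) 0 (by omega)
      (Nat.Coprime.mul_right (Nat.coprime_two_right.mpr hodd) hj)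
      (fun i => |Real.cos (Real.pi / p * i)|)]
  · refine Finset.sum_congr rfl fun i _ => ?_
    congr 2; push_cast; ring
  · intro i
    have : Real.pi / p * ((i + p : ℕ) : ℝ) = Real.pi / p * i + Real.pi := by
      push_cast; field_simp
    simp only [this, Real.cos_add_pi, abs_neg]

theorem bt_sin_sum' (p j : ℕ) (hp : 2 ≤ p) (hodd : Odd p) (hj : Nat.Coprime p j) :
    ∑ i ∈ Finset.range p, |Real.sin (2 * Real.pi / p * j * i)|
      = Real.cos (Real.pi / (2 * p)) / Real.sin (Real.pi / (2 * p)) := by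
  have hp' : (2 : ℝ) ≤ p := by exact_mod_cast hp
  rw [← bt_sin_sum p hp,
    ← bt_reindex p (2 * j) 0 (by omega)
      (Nat.Coprime.mul_right (Nat.coprime_two_right.mpr hodd) hj)
      (fun i => |Real.sin (Real.pi / p * i)|)]
  · refine Finset.sum_congr rfl fun i _ => ?_
    congr 2; push_cast; ring
  · intro i
    have : Real.pi / p * ((i + p : ℕ) : ℝ) = Real.pi / p * i + Real.pi := by
      push_cast; field_simp
    simp only [this, Real.sin_add_pi, abs_neg]

/-- the limiting quantity -/
noncomputable def btB (p : ℕ) : ℝ :=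
  1 / (p : ℝ) * (Real.sqrt 2 * (Real.cos (Real.pi / (2 * p)) / Real.sin (Real.pi / (2 * p))))

theorem bt_l1_sin (p j : ℕ) (hp : p.Prime) (h5 : 5 ≤ p) (hj : p / 2 < j) (hjp : j < p) :
    l1psi p j = btB p := by
  have hodd : Odd p := hp.odd_of_ne_two (by omega)
  have hc : Nat.Coprime p j := (Nat.coprime_of_lt_prime (by omega) hjp hp)
  unfold l1psi btB
  rw [← bt_sin_sum' p j (by omega) hodd hc]
  congr 1
  rw [Finset.mul_sum]
  refine Finset.sum_congr rfl fun i _ => ?_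
  unfold psi
  rw [if_neg (by omega), if_neg (by omega), if_neg (by omega), abs_mul,
    abs_of_nonneg (Real.sqrt_nonneg 2)]

theorem bt_l1_cos (p j : ℕ) (hp : p.Prime) (h5 : 5 ≤ p) (hj0 : j ≠ 0) (hj : j ≤ p / 2) :
    btB p ≤ l1psi p j := by
  have hodd : Odd p := hp.odd_of_ne_two (by omega)
  have hc : Nat.Coprime p j := (Nat.coprime_of_lt_prime hj0 (by omega) hp)
  have : l1psi p j = 1 / (p : ℝ) * (Real.sqrt 2 * (1 / Real.sin (Real.pi / (2 * p)))) := by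
    unfold l1psi
    rw [← bt_cos_sum' p j (by omega) hodd hc]
    congr 1
    rw [Finset.mul_sum]
    refine Finset.sum_congr rfl fun i _ => ?_
    have : p % 2 ≠ 0 := by have := Nat.odd_iff.mp hodd; omega
    have e : psi p j i = Real.sqrt 2 * Real.cos (2 * Real.pi / p * j * i) := by
      unfold psi
      rw [if_neg hj0]
      split_ifs <;> first | rfl | omega
    rw [e, abs_mul, abs_of_nonneg (Real.sqrt_nonneg 2)]
  rw [this, btB]
  have hs := bt_theta p (by omega)
  have := Real.cos_le_one (Real.pi / (2 * p))
  gcongr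

theorem bt_l1_zero (p : ℕ) (hp : 0 < p) : l1psi p 0 = 1 := by
  have : (p : ℝ) ≠ 0 := by positivity
  simp [l1psi, psi, this]

theorem bt_beta (p : ℕ) (hp : p.Prime) (h5 : 5 ≤ p) (hB : btB p < 1) : beta p = btB p := by
  apply IsLeast.csInf_eq
  refine ⟨⟨p - 1, by omega, (bt_l1_sin p (p - 1) hp h5 (by omega) (by omega)).symm⟩, ?_⟩
  rintro x ⟨j, hj, rfl⟩
  rcases Nat.eq_zero_or_pos j with rfl | h0
  · rw [bt_l1_zero p (by omega)]; exact hB.le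
  · rcases le_or_gt j (p / 2) with h | h
    · exact bt_l1_cos p j hp h5 (by omega) h
    · exact (bt_l1_sin p j hp h5 h hj).ge

open Filter Topology in
theorem bt_tendsto : Tendsto btB atTop (𝓝 (2 * Real.sqrt 2 / Real.pi)) := by
  have h1 : Tendsto (fun p : ℕ => Real.pi / (2 * (p : ℝ))) atTop (𝓝 0) :=
    Tendsto.div_atTop tendsto_const_nhds
      (Tendsto.const_mul_atTop (by norm_num) tendsto_natCast_atTop_atTop)
  have h2 : Tendsto (fun x : ℝ => Real.sqrt 2 * Real.cos x / (Real.pi / 2 * Real.sinc x)) (𝓝 0)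
      (𝓝 (2 * Real.sqrt 2 / Real.pi)) := by
    have hc : ContinuousAt
        (fun x : ℝ => Real.sqrt 2 * Real.cos x / (Real.pi / 2 * Real.sinc x)) 0 := by
      apply ContinuousAt.div
      · fun_prop
      · exact (continuous_const.mul Real.continuous_sinc).continuousAt
      · simp [Real.pi_ne_zero]
    have := hc.tendsto
    simp only [Real.cos_zero, Real.sinc_zero, mul_one] at this
    convert this using 2
    field_simp
  refine (h2.comp h1).congr' ?_
  filter_upwards [eventually_ge_atTop 2] with p hp
  have hp' : (2 : ℝ) ≤ p := by exact_mod_cast hp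
  have hs := bt_theta p hp
  have hpi := Real.pi_pos
  simp only [Function.comp, btB]
  rw [Real.sinc_of_ne_zero (by positivity)]
  field_simp

theorem bt_lt_one : 2 * Real.sqrt 2 / Real.pi < 1 := by
  rw [div_lt_one Real.pi_pos]
  have := Real.pi_gt_three
  have h := Real.sq_sqrt (show (0 : ℝ) ≤ 2 by norm_num)
  nlinarith [Real.sqrt_nonneg 2]

/-- As `p → ∞` over the primes, `β(p) → 2√2/π`. -/
theorem beta_tendsto_over_primes :
    ∀ ε : ℝ, 0 < ε → ∃ N : ℕ, ∀ p : ℕ, p.Prime → N < p →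
      |beta p - 2 * Real.sqrt 2 / Real.pi| < ε := by
  intro ε hε
  have h1 := Metric.tendsto_atTop.mp bt_tendsto ε hε
  obtain ⟨N1, h1⟩ := h1
  obtain ⟨N2, h2⟩ := Filter.eventually_atTop.mp (bt_tendsto.eventually_lt_const bt_lt_one)
  refine ⟨N1 + N2 + 5, fun p hp hN => ?_⟩
  rw [bt_beta p hp (by omega) (h2 p (by omega)), ← Real.dist_eq]
  exact h1 p (by omega)
end

section
/- If n ≥ 4 is divisible by 4, then β(n) = 1/√2, and this minimum is attained by the basis vector ψ_{n/4} (whose entries are √2·cos(πi/2), i = 0,…,n−1). -/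
theorem aux_tele (x : ℝ) (n : ℕ) :
    2 * Real.sin x * ∑ i ∈ Finset.range n, Real.cos (2 * (x * i)) =
      Real.sin (2 * (x * n) - x) + Real.sin x := by
  induction n with
  | zero => simp
  | succ m ih =>
    rw [Finset.sum_range_succ, mul_add, ih]
    have e : 2 * (x * ((m + 1 : ℕ) : ℝ)) - x = 2 * (x * m) + x := by push_cast; ring
    rw [e, Real.sin_add, Real.sin_sub]
    ring

theorem aux_cos (n j : ℕ) (h0 : 0 < j) (hj : j < n) (hne : 2 * j ≠ n) :
    ∑ i ∈ Finset.range n, Real.cos (2 * (2 * Real.pi / n * j * i)) = 0 := by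
  have hn : (0 : ℝ) < n := by exact_mod_cast (by omega : 0 < n)
  have hj0 : (0 : ℝ) < j := by exact_mod_cast h0
  have hjn : (j : ℝ) < n := by exact_mod_cast hj
  have hpi := Real.pi_pos
  have t := aux_tele (2 * Real.pi / n * j) n
  have e : 2 * (2 * Real.pi / n * j * n) - 2 * Real.pi / n * j =
      ((2 * j : ℕ) : ℝ) * (2 * Real.pi) - 2 * Real.pi / n * j := by
    push_cast; field_simp
  rw [e, Real.sin_nat_mul_two_pi_sub, neg_add_cancel] at t
  have hs : Real.sin (2 * Real.pi / n * j) ≠ 0 := by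
    intro h
    obtain ⟨k, hk⟩ := Real.sin_eq_zero_iff.mp h
    have h2 : (k : ℝ) * n = 2 * j := by
      field_simp at hk
      linarith
    have h3 : k * (n : ℤ) = 2 * j := by exact_mod_cast h2
    have k0 : 0 < k := by
      by_contra hc
      nlinarith
    have k2 : k < 2 := by
      by_contra hc
      nlinarith
    have k1 : k = 1 := by omega
    subst k1
    omega
  rcases mul_eq_zero.mp t with h | h
  · exact absurd h (by simpa using hs)
  · exact h

theorem aux_cos_sq (n j : ℕ) (h0 : 0 < j) (hj : j < n) (hne : 2 * j ≠ n) :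
    ∑ i ∈ Finset.range n, Real.cos (2 * Real.pi / n * j * i) ^ 2 = n / 2 := by
  simp_rw [Real.cos_sq]
  rw [Finset.sum_add_distrib, ← Finset.sum_div, ← Finset.sum_div, aux_cos n j h0 hj hne]
  simp

theorem aux_sin_sq (n j : ℕ) (h0 : 0 < j) (hj : j < n) (hne : 2 * j ≠ n) :
    ∑ i ∈ Finset.range n, Real.sin (2 * Real.pi / n * j * i) ^ 2 = n / 2 := by
  simp_rw [Real.sin_sq, Finset.sum_sub_distrib, aux_cos_sq n j h0 hj hne]
  simp; ring

theorem aux_sq_le (x : ℝ) (h : |x| ≤ 1) : x ^ 2 ≤ |x| := by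
  rw [← sq_abs]; nlinarith [abs_nonneg x]

theorem aux_val (n : ℕ) (hn : 0 < n) :
    (1 / (n : ℝ)) * (Real.sqrt 2 * (n / 2)) = 1 / Real.sqrt 2 := by
  have h : (n : ℝ) ≠ 0 := by positivity
  have := Real.mul_self_sqrt (show (0 : ℝ) ≤ 2 by norm_num)
  field_simp
  nlinarith

theorem aux_inv : 1 / Real.sqrt 2 ≤ 1 := by
  rw [div_le_one (by positivity)]
  exact Real.one_le_sqrt.mpr (by norm_num)

theorem aux_one (n j : ℕ) (hn : 0 < n) (h : ∀ i, |psi n j i| = 1) :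
    1 / Real.sqrt 2 ≤ l1psi n j := by
  have h' : (n : ℝ) ≠ 0 := by positivity
  unfold l1psi
  simp_rw [h]
  simpa [h'] using aux_inv

theorem aux_lower (n j : ℕ) (hn : 4 ≤ n) (h4 : 4 ∣ n) (hj : j < n) :
    1 / Real.sqrt 2 ≤ l1psi n j := by
  by_cases h0 : j = 0
  · exact aux_one n j (by omega) (fun i => by simp [psi, h0])
  by_cases hh : j = n / 2
  · apply aux_one n j (by omega)
    intro i
    have h' : (n : ℝ) ≠ 0 := by positivity
    have h2 : (n : ℝ) = 2 * j := by exact_mod_cast (by omega : n = 2 * j)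
    have hj' : (j : ℝ) ≠ 0 := by exact_mod_cast h0
    have e : 2 * Real.pi / n * j * i = i * Real.pi := by
      rw [h2]; field_simp
    have : psi n j i = Real.cos (2 * Real.pi / n * j * i) := by
      unfold psi
      rw [if_neg h0, if_neg (by omega), if_pos hh, if_pos (by omega)]
    rw [this, e, Real.cos_nat_mul_pi]
    simp
  rw [← aux_val n (by omega)]
  unfold l1psi
  apply mul_le_mul_of_nonneg_left _ (by positivity)
  by_cases hl : j < n / 2
  · rw [← aux_cos_sq n j (by omega) hj (by omega), Finset.mul_sum]
    apply Finset.sum_le_sum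
    intro i _
    unfold psi
    rw [if_neg h0, if_pos hl, abs_mul, abs_of_nonneg (Real.sqrt_nonneg 2)]
    exact mul_le_mul_of_nonneg_left (aux_sq_le _ (Real.abs_cos_le_one _)) (Real.sqrt_nonneg 2)
  · rw [← aux_sin_sq n j (by omega) hj (by omega), Finset.mul_sum]
    apply Finset.sum_le_sum
    intro i _
    unfold psi
    rw [if_neg h0, if_neg hl, if_neg hh, abs_mul, abs_of_nonneg (Real.sqrt_nonneg 2)]
    exact mul_le_mul_of_nonneg_left (aux_sq_le _ (Real.abs_sin_le_one _)) (Real.sqrt_nonneg 2)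

theorem aux_arg (n i : ℕ) (hn : 4 ≤ n) (h4 : 4 ∣ n) :
    2 * Real.pi / n * ((n / 4 : ℕ) : ℝ) * i = Real.pi * i / 2 := by
  obtain ⟨m, rfl⟩ := h4
  have hm : (m : ℝ) ≠ 0 := by exact_mod_cast (by omega : m ≠ 0)
  rw [Nat.mul_div_cancel_left m (by norm_num)]
  push_cast
  field_simp
  ring

theorem aux_entry (n : ℕ) (hn : 4 ≤ n) (h4 : 4 ∣ n) (i : ℕ) :
    psi n (n / 4) i = Real.sqrt 2 * Real.cos (Real.pi * i / 2) := by
  unfold psi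
  rw [if_neg (by omega), if_pos (by omega), aux_arg n i hn h4]

theorem aux_quarter (n : ℕ) (hn : 4 ≤ n) (h4 : 4 ∣ n) :
    l1psi n (n / 4) = 1 / Real.sqrt 2 := by
  rw [← aux_val n (by omega), ← aux_cos_sq n (n / 4) (by omega) (by omega) (by omega)]
  unfold l1psi
  rw [Finset.mul_sum (a := Real.sqrt 2)]
  congr 1
  apply Finset.sum_congr rfl
  intro i _
  rw [aux_entry n hn h4, aux_arg n i hn h4, abs_mul, abs_of_nonneg (Real.sqrt_nonneg 2)]
  congr 1
  have h1 : Real.sin (2 * (Real.pi * i / 2)) = 0 := by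
    rw [show 2 * (Real.pi * i / 2) = i * Real.pi by ring, Real.sin_nat_mul_pi]
  rw [Real.sin_two_mul] at h1
  have h2 := Real.sin_sq_add_cos_sq (Real.pi * i / 2)
  rcases mul_eq_zero.mp h1 with h | h
  · have h3 : Real.sin (Real.pi * i / 2) = 0 := by linarith
    rw [h3] at h2
    have h5 : Real.cos (Real.pi * i / 2) ^ 2 = 1 := by linarith
    rw [h5]
    rcases (sq_eq_sq_iff_eq_or_eq_neg.mp (h5.trans (one_pow 2).symm)) with h | h <;> simp [h]
  · simp [h]

/-- If `4 ∣ n` (and `n ≥ 4`), then `β(n) = 1/√2`, attained by the basis vector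
`ψ_{n/4}`, whose entries are `√2 cos(πi/2)`. -/
theorem beta_eq_of_four_dvd (n : ℕ) (hn : 4 ≤ n) (h4 : 4 ∣ n) :
    beta n = 1 / Real.sqrt 2 ∧ l1psi n (n / 4) = 1 / Real.sqrt 2 ∧
      ∀ i : ℕ, psi n (n / 4) i = Real.sqrt 2 * Real.cos (Real.pi * i / 2) := by
  refine ⟨?_, aux_quarter n hn h4, aux_entry n hn h4⟩
  have : IsLeast {x | ∃ j < n, x = l1psi n j} (1 / Real.sqrt 2) := by
    refine ⟨⟨n / 4, by omega, (aux_quarter n hn h4).symm⟩, ?_⟩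
    rintro x ⟨j, hj, rfl⟩
    exact aux_lower n j hn h4 hj
  exact this.csInf_eq
end

section
/- For every n ≥ 1, M(n) ≤ 3π, where M(n) = (3π/2)β(n)^{−2}. -/
lemma sum_cos_zero (n j : ℕ) (hj : 0 < j) (hjn : j < n) (h2 : 2 * j ≠ n) :
    ∑ i ∈ Finset.range n, Real.cos (2 * (2 * Real.pi / n * j * i)) = 0 := by
  have hn : (n : ℝ) ≠ 0 := by
    have : n ≠ 0 := by omega
    exact_mod_cast this
  set a : ℝ := 2 * Real.pi / n * j with ha
  have han : a * n = j * (2 * Real.pi) := by rw [ha]; field_simp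
  have hs : Real.sin a ≠ 0 := by
    intro h
    obtain ⟨k, hk⟩ := Real.sin_eq_zero_iff.mp h
    have h3 : Real.pi * ((k : ℝ) * n) = Real.pi * (2 * j) := by
      have : (k : ℝ) * Real.pi * n = j * (2 * Real.pi) := by rw [hk, han]
      linarith
    have h4 := mul_left_cancel₀ Real.pi_ne_zero h3
    have h5 : k * (n : ℤ) = 2 * j := by exact_mod_cast h4
    have hk0 : 0 < k := by
      by_contra hc
      push Not at hc
      nlinarith
    have hk2 : k < 2 := by
      by_contra hc
      push Not at hc
      nlinarith
    have hk1 : k = 1 := by omega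
    subst hk1
    omega
  have key : ∀ m : ℕ, 2 * Real.sin a * ∑ i ∈ Finset.range m, Real.cos (2 * (a * i))
      = Real.sin (2 * (a * m) - a) + Real.sin a := by
    intro m
    induction m with
    | zero => simp
    | succ m ih =>
      rw [Finset.sum_range_succ, mul_add, ih]
      have e : 2 * (a * ((m + 1 : ℕ) : ℝ)) - a = 2 * (a * m) + a := by push_cast; ring
      rw [e, Real.sin_add, Real.sin_sub]
      ring
  have h := key n
  have e : 2 * (a * (n : ℝ)) - a = ((2 * j : ℕ) : ℝ) * (2 * Real.pi) - a := by
    rw [han]; push_cast; ring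
  rw [e, Real.sin_nat_mul_two_pi_sub] at h
  have h' : 2 * Real.sin a * ∑ i ∈ Finset.range n, Real.cos (2 * (a * i)) = 0 := by
    rw [h]; ring
  rcases mul_eq_zero.mp h' with h0 | h0
  · exact absurd h0 (by simpa using hs)
  · exact h0

lemma l1_of_sum (n j : ℕ) (hn : 1 ≤ n) (h : Real.sqrt 2 / 2 * n ≤ ∑ i ∈ Finset.range n, |psi n j i|) :
    Real.sqrt 2 / 2 ≤ l1psi n j := by
  have : (0 : ℝ) < n := by exact_mod_cast hn
  unfold l1psi
  rw [one_div, ← div_eq_inv_mul, le_div_iff₀ this]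
  exact h

lemma sqrt2_half_le : Real.sqrt 2 / 2 ≤ 1 := by
  have : Real.sqrt 2 ≤ 2 := by
    rw [Real.sqrt_le_left (by norm_num)]; norm_num
  linarith

lemma abs_ge_sq {x : ℝ} (h : |x| ≤ 1) : x ^ 2 ≤ |x| := by
  rw [← sq_abs]; nlinarith [abs_nonneg x]

lemma cos_case (n j : ℕ) (hj : 0 < j) (hjn : j < n) (h2 : 2 * j ≠ n) :
    Real.sqrt 2 / 2 * n ≤
      ∑ i ∈ Finset.range n, |Real.sqrt 2 * Real.cos (2 * Real.pi / n * j * i)| := by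
  calc Real.sqrt 2 / 2 * n = ∑ i ∈ Finset.range n,
      (Real.sqrt 2 / 2 + Real.sqrt 2 / 2 * Real.cos (2 * (2 * Real.pi / n * j * i))) := by
        rw [Finset.sum_add_distrib, ← Finset.mul_sum, sum_cos_zero n j hj hjn h2]
        simp [mul_comm]
    _ ≤ _ := by
        apply Finset.sum_le_sum
        intro i _
        rw [abs_mul, abs_of_nonneg (Real.sqrt_nonneg 2), Real.cos_two_mul]
        have := mul_le_mul_of_nonneg_left
          (abs_ge_sq (Real.abs_cos_le_one (2 * Real.pi / n * j * i))) (Real.sqrt_nonneg 2)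
        linarith

lemma sin_case (n j : ℕ) (hj : 0 < j) (hjn : j < n) (h2 : 2 * j ≠ n) :
    Real.sqrt 2 / 2 * n ≤
      ∑ i ∈ Finset.range n, |Real.sqrt 2 * Real.sin (2 * Real.pi / n * j * i)| := by
  calc Real.sqrt 2 / 2 * n = ∑ i ∈ Finset.range n,
      (Real.sqrt 2 / 2 + -(Real.sqrt 2 / 2) * Real.cos (2 * (2 * Real.pi / n * j * i))) := by
        rw [Finset.sum_add_distrib, ← Finset.mul_sum, sum_cos_zero n j hj hjn h2]
        simp [mul_comm]
    _ ≤ _ := by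
        apply Finset.sum_le_sum
        intro i _
        rw [abs_mul, abs_of_nonneg (Real.sqrt_nonneg 2), Real.cos_two_mul, Real.cos_sq']
        have := mul_le_mul_of_nonneg_left
          (abs_ge_sq (Real.abs_sin_le_one (2 * Real.pi / n * j * i))) (Real.sqrt_nonneg 2)
        linarith

lemma l1_ge (n j : ℕ) (hn : 1 ≤ n) (hjn : j < n) : Real.sqrt 2 / 2 ≤ l1psi n j := by
  apply l1_of_sum n j hn
  have hnn : (0 : ℝ) ≤ n := Nat.cast_nonneg n
  unfold psi
  by_cases h0 : j = 0
  · simp only [h0, if_true]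
    simpa using mul_le_mul_of_nonneg_right sqrt2_half_le hnn
  have hj : 0 < j := Nat.pos_of_ne_zero h0
  simp only [h0, if_false]
  by_cases h1 : j < n / 2
  · simp only [h1, if_true]
    exact cos_case n j hj hjn (by omega)
  simp only [h1, if_false]
  by_cases h2 : j = n / 2
  · skip
    by_cases h3 : n % 2 = 0
    · have h4 : (n : ℝ) = 2 * j := by
        have : n = 2 * j := by omega
        exact_mod_cast this
      have hj' : (j : ℝ) ≠ 0 := by exact_mod_cast h0
      have : ∀ i ∈ Finset.range n, |Real.cos (2 * Real.pi / n * j * i)| = 1 := by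
        intro i _
        have e : 2 * Real.pi / n * j * i = i * Real.pi := by
          rw [h4]; field_simp
        rw [e, Real.cos_nat_mul_pi]
        simp
      simp only [if_pos h2, if_pos h3]
      rw [Finset.sum_congr rfl this]
      simpa using mul_le_mul_of_nonneg_right sqrt2_half_le hnn
    · simp only [if_pos h2, if_neg h3]
      exact cos_case n j hj hjn (by omega)
  · simp only [if_neg h2]
    exact sin_case n j hj hjn (by omega)

/-- `M(n) ≤ 3π` for every `n ≥ 1`. -/
theorem Mnaz_le_three_pi (n : ℕ) (hn : 1 ≤ n) : Mnaz n ≤ 3 * Real.pi := by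
  have hb : Real.sqrt 2 / 2 ≤ beta n := by
    apply le_csInf
    · exact ⟨l1psi n 0, 0, hn, rfl⟩
    · rintro x ⟨j, hj, rfl⟩
      exact l1_ge n j hn hj
  have hs : (0 : ℝ) < Real.sqrt 2 / 2 := by positivity
  have hsq : (1 : ℝ) / 2 ≤ beta n ^ 2 := by
    have h := pow_le_pow_left₀ hs.le hb 2
    rw [div_pow, Real.sq_sqrt (by norm_num)] at h
    linarith
  unfold Mnaz
  rw [div_le_iff₀ (by linarith)]
  nlinarith [Real.pi_pos]
end

section
/- Let n ≥ 1 and let r ∈ [0, n]. For every x ∈ [0,1]^n with ∑_{i=1}^{n} x_i = r, one has ∑_{i=1}^{n} x_i² ≤ ⌊r⌋ + (r − ⌊r⌋)², and this bound is attained by some x ∈ [0,1]^n with ∑ x_i = r (namely, ⌊r⌋ coordinates equal to 1, one coordinate equal to r − ⌊r⌋, the rest 0). -/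
lemma step_ineq (r a : ℝ) (h0 : 0 ≤ a) (h1 : a ≤ 1) :
    a ^ 2 + ((⌊r⌋ : ℝ) + (r - (⌊r⌋ : ℝ)) ^ 2) ≤
      (⌊a + r⌋ : ℝ) + (a + r - (⌊a + r⌋ : ℝ)) ^ 2 := by
  have hf0 := Int.floor_le r
  have hf1 := Int.lt_floor_add_one r
  by_cases h : a + r < ⌊r⌋ + 1
  · have e : ⌊a + r⌋ = ⌊r⌋ := by
      rw [Int.floor_eq_iff]; constructor <;> linarith
    rw [e]
    nlinarith [mul_nonneg h0 (sub_nonneg.2 hf0)]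
  · have e : ⌊a + r⌋ = ⌊r⌋ + 1 := by
      rw [Int.floor_eq_iff]; push_cast; constructor <;> linarith
    rw [e]
    push_cast
    nlinarith [mul_nonneg (sub_nonneg.2 h1) (sub_nonneg.2 hf1.le)]

lemma upper (n : ℕ) : ∀ x : Fin n → ℝ, (∀ i, x i ∈ Set.Icc (0 : ℝ) 1) →
    ∑ i, x i ^ 2 ≤ (⌊∑ i, x i⌋ : ℝ) + (∑ i, x i - (⌊∑ i, x i⌋ : ℝ)) ^ 2 := by
  induction n with
  | zero => intro x _; simp
  | succ n ih =>
    intro x hx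
    rw [Fin.sum_univ_succ, Fin.sum_univ_succ]
    have h1 := ih (fun i => x i.succ) (fun i => hx _)
    have h2 := step_ineq (∑ i : Fin n, x i.succ) (x 0) (hx 0).1 (hx 0).2
    linarith

lemma attained (n : ℕ) : ∀ r : ℝ, 0 ≤ r → r ≤ n →
    ∃ x : Fin n → ℝ, (∀ i, x i ∈ Set.Icc (0 : ℝ) 1) ∧ ∑ i, x i = r ∧
        ∑ i, x i ^ 2 = (⌊r⌋ : ℝ) + (r - (⌊r⌋ : ℝ)) ^ 2 := by
  induction n with
  | zero =>
    intro r h0 h1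
    have : r = 0 := le_antisymm (by simpa using h1) h0
    subst this
    exact ⟨fun _ => 0, by simp, by simp, by simp⟩
  | succ n ih =>
    intro r h0 h1
    push_cast at h1
    by_cases h : 1 ≤ r
    · obtain ⟨x, hx, hs, hq⟩ := ih (r - 1) (by linarith) (by linarith)
      refine ⟨Fin.cons 1 x, ?_, ?_, ?_⟩
      · intro i
        refine Fin.cases ?_ (fun j => ?_) i
        · simp
        · simpa using hx j
      · simp [Fin.sum_univ_succ, hs]
      · rw [Fin.sum_univ_succ]
        simp only [Fin.cons_zero, Fin.cons_succ]
        rw [hq, Int.floor_sub_one]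
        push_cast
        ring
    · have e : ⌊r⌋ = 0 := by
        rw [Int.floor_eq_iff]; push_cast; constructor <;> linarith
      refine ⟨Fin.cons r (fun _ => 0), ?_, ?_, ?_⟩
      · intro i
        refine Fin.cases ?_ (fun j => ?_) i
        · simp only [Fin.cons_zero]; exact ⟨h0, by linarith⟩
        · simp
      · simp [Fin.sum_univ_succ]
      · simp [Fin.sum_univ_succ, e]

/-- The maximum of `∑ x_i²` over `x ∈ [0,1]^n` with `∑ x_i = r` is
`⌊r⌋ + (r - ⌊r⌋)²`, and this bound is attained. -/
theorem sum_sq_max_on_cube_slice (n : ℕ) (hn : 1 ≤ n) (r : ℝ)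
    (hr : r ∈ Set.Icc (0 : ℝ) (n : ℝ)) :
    (∀ x : Fin n → ℝ, (∀ i, x i ∈ Set.Icc (0 : ℝ) 1) → ∑ i, x i = r →
        ∑ i, x i ^ 2 ≤ (⌊r⌋ : ℝ) + (r - (⌊r⌋ : ℝ)) ^ 2) ∧
      (∃ x : Fin n → ℝ, (∀ i, x i ∈ Set.Icc (0 : ℝ) 1) ∧ ∑ i, x i = r ∧
        ∑ i, x i ^ 2 = (⌊r⌋ : ℝ) + (r - (⌊r⌋ : ℝ)) ^ 2) := by
  refine ⟨fun x hx hs => ?_, attained n r hr.1 hr.2⟩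
  subst hs
  exact upper n x hx
end

section
/- (Waterfilling optimality for the LMMSE objective.) Let m ≥ 1, let c_1,…,c_m > 0, let γ > 0 and P ≥ 0. Suppose T ≥ 0 satisfies ∑_{i=1}^{m} max(T − c_i, 0) = γP, and set P*_i = (1/γ)·max(T − c_i, 0). Then for every q ∈ ℝ^m with q_i ≥ 0 for all i and ∑_{i=1}^{m} q_i ≤ P, one has ∑_{i=1}^{m} 1/(c_i + γ q_i) ≥ ∑_{i=1}^{m} 1/(c_i + γ P*_i). -/
theorem tangent_aux (x y : ℝ) (hx : 0 < x) (hy : 0 < y) :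
    1 / x ≤ 1 / y + (y - x) / x ^ 2 := by
  have h : 1 / y + (y - x) / x ^ 2 - 1 / x = (y - x) ^ 2 / (y * x ^ 2) := by
    field_simp
    ring
  have : 0 ≤ (y - x) ^ 2 / (y * x ^ 2) := by positivity
  linarith

/-- Waterfilling optimality for the LMMSE objective: the waterfilling allocation
`P*_i = (1/γ) max(T - c_i, 0)` at water level `T` minimizes `∑ 1/(c_i + γ q_i)`
over all nonnegative allocations `q` of total power at most `P`. -/
theorem waterfilling_optimal (m : ℕ) (hm : 1 ≤ m) (c : Fin m → ℝ) (hc : ∀ i, 0 < c i)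
    (γ P T : ℝ) (hγ : 0 < γ) (hP : 0 ≤ P) (hT : 0 ≤ T)
    (hwf : ∑ i, max (T - c i) 0 = γ * P)
    (Pstar : Fin m → ℝ) (hPstar : ∀ i, Pstar i = (1 / γ) * max (T - c i) 0)
    (q : Fin m → ℝ) (hq : ∀ i, 0 ≤ q i) (hqP : ∑ i, q i ≤ P) :
    ∑ i, 1 / (c i + γ * Pstar i) ≤ ∑ i, 1 / (c i + γ * q i) := by
  have hw : ∀ i, γ * Pstar i = max (T - c i) 0 := by
    intro i
    rw [hPstar i]
    field_simp
  simp only [hw]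
  rcases hT.eq_or_lt with h0 | hT0
  · have hw0 : ∀ i, max (T - c i) 0 = 0 := fun i => max_eq_right (by linarith [hc i])
    simp only [hw0, Finset.sum_const_zero] at hwf
    have hP0 : P = 0 := by
      rcases mul_eq_zero.mp hwf.symm with h | h
      · exact absurd h hγ.ne'
      · exact h
    have hq0 : ∀ i, q i = 0 := by
      intro i
      have := Finset.single_le_sum (f := q) (fun j _ => hq j) (Finset.mem_univ i)
      linarith [hq i]
    simp only [hw0, hq0, mul_zero, le_refl]
  · have key : ∀ i, 1 / (c i + max (T - c i) 0) ≤
        1 / (c i + γ * q i) + (γ * q i - max (T - c i) 0) / T ^ 2 := by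
      intro i
      have hci := hc i
      have hgq : 0 ≤ γ * q i := mul_nonneg hγ.le (hq i)
      rcases le_total T (c i) with h | h
      · rw [max_eq_right (by linarith)]
        have h1 := tangent_aux (c i) (c i + γ * q i) hci (by linarith)
        have h2 : (c i + γ * q i - c i) / c i ^ 2 ≤ (γ * q i - 0) / T ^ 2 := by
          rw [add_sub_cancel_left, sub_zero]
          gcongr
        rw [add_zero]
        linarith
      · rw [max_eq_left (by linarith)]
        have h1 := tangent_aux T (c i + γ * q i) hT0 (by linarith)
        have e1 : c i + (T - c i) = T := by ring
        have e2 : γ * q i - (T - c i) = c i + γ * q i - T := by ring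
        rw [e1, e2]
        exact h1
    have hs := Finset.sum_le_sum (fun i (_ : i ∈ Finset.univ) => key i)
    rw [Finset.sum_add_distrib, ← Finset.sum_div, Finset.sum_sub_distrib, hwf,
      ← Finset.mul_sum] at hs
    have : (γ * ∑ i, q i - γ * P) / T ^ 2 ≤ 0 :=
      div_nonpos_of_nonpos_of_nonneg (by nlinarith) (by positivity)
    linarith
end

section
/- Let p be a prime with p ≡ 3 (mod 4), and define a ∈ {0,1}^p by a_i = 1 if i is a nonzero quadratic residue modulo p and a_i = 0 otherwise. Then for every j with 1 ≤ j ≤ p−1, |â_j|² = (p+1)/4. (In particular, a is a spectrally flat binary sequence of transmissivity (p−1)/(2p).) -/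
theorem fin_cast_bij (p : ℕ) [Fact p.Prime] :
    Function.Bijective (fun i : Fin p => ((i : ℕ) : ZMod p)) := by
  rw [Fintype.bijective_iff_injective_and_card]
  refine ⟨?_, by simp [ZMod.card]⟩
  intro i j h
  have h' := (ZMod.natCast_eq_natCast_iff' _ _ _).1 h
  rw [Nat.mod_eq_of_lt i.2, Nat.mod_eq_of_lt j.2] at h'
  exact Fin.ext h'

theorem qr_val (p : ℕ) [Fact p.Prime] (i : Fin p) (r : ℝ) [Decidable ((i : ℕ) ≠ 0 ∧ ∃ k : ℕ, ((i : ℕ) : ZMod p) = (k : ZMod p) ^ 2)]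
    (h : r = if (i : ℕ) ≠ 0 ∧ ∃ k : ℕ, ((i : ℕ) : ZMod p) = (k : ZMod p) ^ 2 then 1 else 0) :
    r = (1 + ((quadraticChar (ZMod p) ((i : ℕ) : ZMod p) : ℤ) : ℝ)
      - (if ((i : ℕ) : ZMod p) = 0 then 1 else 0)) / 2 := by
  subst h
  have h0 : ((i : ℕ) : ZMod p) = 0 ↔ (i : ℕ) = 0 := by
    rw [ZMod.natCast_eq_zero_iff]
    exact ⟨fun h => Nat.eq_zero_of_dvd_of_lt h i.2, fun h => h ▸ dvd_zero _⟩
  have hs : (∃ k : ℕ, ((i : ℕ) : ZMod p) = (k : ZMod p) ^ 2) ↔ IsSquare ((i : ℕ) : ZMod p) := by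
    rw [isSquare_iff_exists_sq]
    constructor
    · rintro ⟨k, hk⟩; exact ⟨_, hk⟩
    · rintro ⟨k, hk⟩; exact ⟨k.val, by simpa using hk⟩
  simp only [hs]
  by_cases hi : (i : ℕ) = 0
  · simp [hi]
  · have hi' : ((i : ℕ) : ZMod p) ≠ 0 := fun h => hi (h0.1 h)
    by_cases hq : IsSquare ((i : ℕ) : ZMod p)
    · rw [(quadraticChar_one_iff_isSquare hi').2 hq, if_pos ⟨hi, hq⟩, if_neg hi']; norm_num
    · rw [quadraticChar_neg_one_iff_not_isSquare.2 hq, if_neg (fun h => hq h.2), if_neg hi']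
      norm_num

open Classical in
/-- For a prime `p ≡ 3 (mod 4)`, the quadratic-residue indicator sequence is
spectrally flat: `|â_j|² = (p+1)/4` for all nonzero frequencies `j`, and its
transmissivity is `(p-1)/(2p)`. -/
theorem quadratic_residue_spectrally_flat (p : ℕ) (hp : p.Prime) (hp4 : p % 4 = 3)
    (a : Fin p → ℝ)
    (ha : ∀ i : Fin p,
      a i = if (i : ℕ) ≠ 0 ∧ ∃ k : ℕ, ((i : ℕ) : ZMod p) = (k : ZMod p) ^ 2 then 1 else 0) :
    (∀ j : Fin p, (j : ℕ) ≠ 0 → ‖dft a j‖ ^ 2 = ((p : ℝ) + 1) / 4) ∧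
      transmissivity a = ((p : ℝ) - 1) / (2 * p) := by
  have : Fact p.Prime := ⟨hp⟩
  have hF : ringChar (ZMod p) ≠ 2 := by
    rw [ZMod.ringChar_zmod_n]; omega
  have ha' := fun i => qr_val p i _ (ha i)
  have hp0 : (p : ℝ) ≠ 0 := by exact_mod_cast hp.ne_zero
  constructor
  · intro j hj
    set ψ : AddChar (ZMod p) ℂ := AddChar.mulShift ZMod.stdAddChar (-((j : ℕ) : ZMod p)) with hψ
    have hj' : -((j : ℕ) : ZMod p) ≠ 0 := by
      rw [neg_ne_zero, Ne, ZMod.natCast_eq_zero_iff]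
      exact fun h => hj (Nat.eq_zero_of_dvd_of_lt h j.2)
    have hψ1 : ψ ≠ 1 := ZMod.isPrimitive_stdAddChar p hj'
    have hψp : ψ.IsPrimitive := AddChar.IsPrimitive.of_ne_one hψ1
    set χ : MulChar (ZMod p) ℂ := (quadraticChar (ZMod p)).ringHomComp (Int.castRingHom ℂ) with hχ
    have hχ1 : χ ≠ 1 :=
      (MulChar.ringHomComp_ne_one_iff (Int.cast_injective (α := ℂ))).2 (quadraticChar_ne_one hF)
    have hχ2 : χ.IsQuadratic := (quadraticChar_isQuadratic (ZMod p)).comp _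
    have hneg : χ (-1) = -1 := by
      have : quadraticChar (ZMod p) (-1) = -1 := by
        rw [quadraticChar_neg_one_iff_not_isSquare, FiniteField.isSquare_neg_one_iff, ZMod.card]
        simp [hp4]
      simp [hχ, MulChar.ringHomComp_apply, this]
    have hG := gaussSum_sq hχ1 hχ2 hψp
    rw [hneg, ZMod.card] at hG
    have hd : dft a j = (gaussSum χ ψ - 1) / 2 := by
      have h1 : dft a j = ∑ x : ZMod p, ((1 + χ x - (if x = 0 then 1 else 0)) / 2) * ψ x := by
        rw [← (fin_cast_bij p).sum_comp]
        unfold dft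
        refine Finset.sum_congr rfl fun i _ => ?_
        congr 1
        · rw [ha' i]
          push_cast
          simp [hχ, MulChar.ringHomComp_apply]
          split_ifs <;> simp
        · have : -((j : ℕ) : ZMod p) * ((i : ℕ) : ZMod p) = ((-((j : ℕ) : ℤ) * ((i : ℕ) : ℤ) : ℤ) : ZMod p) := by
            push_cast; rfl
          rw [hψ, AddChar.mulShift_apply, this, ZMod.stdAddChar_coe]
          congr 1
          push_cast
          ring
      have h2 : ∀ x : ZMod p, ((1 + χ x - (if x = 0 then 1 else 0)) / 2) * ψ x
          = (ψ x + χ x * ψ x - (if x = 0 then ψ x else 0)) / 2 := by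
        intro x; split_ifs <;> ring
      rw [h1, Finset.sum_congr rfl fun x _ => h2 x, ← Finset.sum_div, Finset.sum_sub_distrib,
        Finset.sum_add_distrib, AddChar.sum_eq_zero_of_ne_one hψ1]
      simp [gaussSum]
    rw [hd]
    generalize gaussSum χ ψ = G at hG
    have hre := congrArg Complex.re hG
    have him := congrArg Complex.im hG
    simp [pow_two] at hre him
    have hpp : (0 : ℝ) < p := by exact_mod_cast hp.pos
    have hr : G.re = 0 := by
      have hm : G.re * G.im = 0 := by linarith
      rcases mul_eq_zero.1 hm with h | h
      · exact h
      · rw [h] at hre; nlinarith [mul_self_nonneg G.re]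
    rw [norm_div, div_pow, ← Complex.normSq_eq_norm_sq, Complex.normSq_apply]
    simp [hr] at hre ⊢
    rw [hre]; ring
  · have hs : ∑ i : Fin p, a i = ((p : ℝ) - 1) / 2 := by
      have h1 : ∑ i : Fin p, a i = ∑ x : ZMod p,
          (1 + ((quadraticChar (ZMod p) x : ℤ) : ℝ) - (if x = 0 then 1 else 0)) / 2 := by
        rw [← (fin_cast_bij p).sum_comp]
        exact Finset.sum_congr rfl fun i _ => ha' i
      have h2 : ∑ x : ZMod p, ((quadraticChar (ZMod p) x : ℤ) : ℝ) = 0 := by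
        exact_mod_cast quadraticChar_sum_zero hF
      rw [h1, ← Finset.sum_div, Finset.sum_sub_distrib, Finset.sum_add_distrib, h2]
      simp [ZMod.card]
    unfold transmissivity
    rw [hs]
    field_simp
end

section
/- For every a > 0, sup_{x ∈ [0,1]} f_a(x) ≤ 2·f_a(1/2), where f_a(x) = x(1−x)/(a+x). Moreover the constant 2 is sharp: sup_{a>0} (sup_{x∈[0,1]} f_a(x))/f_a(1/2) = 2, approached as a → 0. -/
/-- `f_a(x) = x(1-x)/(a+x)`: the usable-power-to-noise tradeoff of a
transmissivity-`x` aperture at thermal-to-shot noise ratio `a = W/J`. -/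
noncomputable def fPow (a x : ℝ) : ℝ := x * (1 - x) / (a + x)

/-- `sup_{x∈[0,1]} f_a(x) ≤ 2 f_a(1/2)` for every `a > 0`, and the constant `2`
is sharp, approached as `a → 0`. -/
theorem transmissivity_half_loss_factor :
    (∀ a : ℝ, 0 < a → ∀ x ∈ Set.Icc (0 : ℝ) 1, fPow a x ≤ 2 * fPow a (1 / 2)) ∧
      (∀ ε : ℝ, 0 < ε → ∃ a : ℝ, 0 < a ∧ a < ε ∧
        ∃ x ∈ Set.Icc (0 : ℝ) 1, (2 - ε) * fPow a (1 / 2) < fPow a x) := by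
  constructor
  · intro a ha x hx
    obtain ⟨h0, h1⟩ := hx
    have e : 2 * fPow a (1 / 2) = 1 / (2 * a + 1) := by
      unfold fPow
      have : a + 1 / 2 ≠ 0 := by positivity
      field_simp
      ring
    rw [e]
    unfold fPow
    rw [div_le_div_iff₀ (by positivity) (by positivity)]
    nlinarith [mul_nonneg ha.le (sq_nonneg (2 * x - 1)), sq_nonneg x]
  · intro ε hε
    obtain ⟨d, hd, hd1, hd2⟩ : ∃ d : ℝ, 0 < d ∧ 8 * d ≤ ε ∧ 8 * d ≤ 1 := by
      refine ⟨min ε 1 / 8, by positivity, ?_, ?_⟩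
      · linarith [min_le_left ε 1]
      · linarith [min_le_right ε 1]
    refine ⟨d ^ 2, by positivity, by nlinarith, d, ⟨hd.le, by linarith⟩, ?_⟩
    have e1 : fPow (d ^ 2) (1 / 2) = 1 / (2 * (2 * d ^ 2 + 1)) := by
      unfold fPow
      have : d ^ 2 + 1 / 2 ≠ 0 := by positivity
      field_simp
      ring
    have e2 : fPow (d ^ 2) d = (1 - d) / (1 + d) := by
      unfold fPow
      have : d ^ 2 + d ≠ 0 := by positivity
      have : 1 + d ≠ 0 := by positivity
      rw [div_eq_div_iff (by assumption) (by assumption)]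
      ring
    rw [e1, e2, mul_one_div, div_lt_div_iff₀ (by positivity) (by positivity)]
    have h : (2 - ε) * (1 + d) ≤ (2 - 8 * d) * (1 + d) :=
      mul_le_mul_of_nonneg_right (by linarith) (by positivity)
    nlinarith [mul_nonneg (sq_nonneg d) (by linarith : (0:ℝ) ≤ 1 - 8 * d)]
end

section
/- For every a > 0, sup_{x ∈ [0,1]} f_a(x) ≤ (4/3)·max(f_a(1/4), f_a(1/2)), where f_a(x) = x(1−x)/(a+x). Moreover the constant 4/3 is sharp as a → 0. -/
/-- `sup_{x∈[0,1]} f_a(x) ≤ (4/3) max(f_a(1/4), f_a(1/2))` for every `a > 0`, and the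
constant `4/3` is sharp as `a → 0`. -/
theorem transmissivity_quarter_half_loss_factor :
    (∀ a : ℝ, 0 < a → ∀ x ∈ Set.Icc (0 : ℝ) 1,
        fPow a x ≤ (4 / 3) * max (fPow a (1 / 4)) (fPow a (1 / 2))) ∧
      (∀ ε : ℝ, 0 < ε → ∃ a : ℝ, 0 < a ∧ a < ε ∧
        ∃ x ∈ Set.Icc (0 : ℝ) 1,
          (4 / 3 - ε) * max (fPow a (1 / 4)) (fPow a (1 / 2)) < fPow a x) := by
  constructor
  · intro a ha x hx
    obtain ⟨h0, h1⟩ := hx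
    have hq : (4 / 3) * fPow a (1 / 4) = 1 / (4 * a + 1) := by
      unfold fPow
      have : a + 1 / 4 ≠ 0 := by positivity
      have : 4 * a + 1 ≠ 0 := by positivity
      field_simp
      ring
    have hx : fPow a x ≤ 1 / (4 * a + 1) := by
      unfold fPow
      rw [div_le_div_iff₀ (by positivity) (by positivity)]
      nlinarith [mul_nonneg ha.le (sq_nonneg (1 - 2 * x)), sq_nonneg x]
    have := le_max_left (fPow a (1 / 4)) (fPow a (1 / 2))
    linarith
  · intro ε hε
    obtain ⟨t, ht, ht4, htε⟩ : ∃ t : ℝ, 0 < t ∧ t ≤ 1 / 4 ∧ 4 * t ≤ ε :=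
      ⟨min ε 1 / 4, by positivity, by linarith [min_le_right ε 1],
        by linarith [min_le_left ε 1]⟩
    refine ⟨t ^ 2, by positivity, by nlinarith, t, ⟨ht.le, by linarith⟩, ?_⟩
    have hx : 1 - 2 * t ≤ fPow (t ^ 2) t := by
      unfold fPow
      rw [le_div_iff₀ (by positivity)]
      nlinarith [pow_pos ht 3, pow_pos ht 2]
    have hm : max (fPow (t ^ 2) (1 / 4)) (fPow (t ^ 2) (1 / 2)) ≤ 3 / 4 := by
      apply max_le
      · unfold fPow
        rw [div_le_iff₀ (by positivity)]
        nlinarith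
      · unfold fPow
        rw [div_le_iff₀ (by positivity)]
        nlinarith
    have hp : 0 ≤ max (fPow (t ^ 2) (1 / 4)) (fPow (t ^ 2) (1 / 2)) := by
      apply le_max_of_le_left
      unfold fPow
      apply div_nonneg
      · norm_num
      · positivity
    generalize max (fPow (t ^ 2) (1 / 4)) (fPow (t ^ 2) (1 / 2)) = m at hm hp
    have e1 : (4 / 3 - ε) * m ≤ (4 / 3 - 4 * t) * m :=
      mul_le_mul_of_nonneg_right (by linarith) hp
    have e2 : (4 / 3 - 4 * t) * m ≤ (4 / 3 - 4 * t) * (3 / 4) :=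
      mul_le_mul_of_nonneg_left hm (by linarith)
    linarith
end

section
/- For every a > 0, sup_{x ∈ [0,1]} f_a(x) ≤ (8/7)·max(f_a(1/8), f_a(1/4), f_a(1/2)), where f_a(x) = x(1−x)/(a+x). Moreover the constant 8/7 is sharp as a → 0. -/
/-- `sup_{x∈[0,1]} f_a(x) ≤ (8/7) max(f_a(1/8), f_a(1/4), f_a(1/2))` for every `a > 0`,
and the constant `8/7` is sharp as `a → 0`. -/
theorem transmissivity_eighth_quarter_half_loss_factor :
    (∀ a : ℝ, 0 < a → ∀ x ∈ Set.Icc (0 : ℝ) 1,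
        fPow a x ≤ (8 / 7) * max (fPow a (1 / 8)) (max (fPow a (1 / 4)) (fPow a (1 / 2)))) ∧
      (∀ ε : ℝ, 0 < ε → ∃ a : ℝ, 0 < a ∧ a < ε ∧
        ∃ x ∈ Set.Icc (0 : ℝ) 1,
          (8 / 7 - ε) * max (fPow a (1 / 8)) (max (fPow a (1 / 4)) (fPow a (1 / 2)))
            < fPow a x) := by
  constructor
  · intro a ha x hx
    obtain ⟨h0, h1⟩ := hx
    have hax : 0 < a + x := by linarith
    by_cases c1 : a ≤ 1 / 8
    · refine le_trans ?_ (mul_le_mul_of_nonneg_left (le_max_left _ _) (by norm_num))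
      have e : (8 / 7 : ℝ) * fPow a (1 / 8) = 1 / (8 * a + 1) := by
        unfold fPow; field_simp; ring
      rw [e, fPow, div_le_div_iff₀ hax (by linarith)]
      have := mul_nonneg (mul_nonneg ha.le (sub_nonneg.2 c1)) (zero_le_one (α := ℝ))
      have k : 0 ≤ (8 * a + 1) * ((8 * a + 1) * x ^ 2 - 8 * a * x + a) := by
        nlinarith [sq_nonneg ((8 * a + 1) * x - 4 * a)]
      have := nonneg_of_mul_nonneg_right k (by linarith)
      linarith
    by_cases c2 : a ≤ 1 / 2
    · refine le_trans ?_ (mul_le_mul_of_nonneg_left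
        ((le_max_left _ _).trans (le_max_right _ _)) (by norm_num))
      have e : (8 / 7 : ℝ) * fPow a (1 / 4) = 6 / (7 * (4 * a + 1)) := by
        unfold fPow; field_simp; ring
      rw [e, fPow, div_le_div_iff₀ hax (by linarith)]
      have k : 0 ≤ (28 * (4 * a + 1)) * (7 * (4 * a + 1) * x ^ 2 - (28 * a + 1) * x + 6 * a) := by
        nlinarith [sq_nonneg (14 * (4 * a + 1) * x - (28 * a + 1)),
          mul_nonneg (sub_nonneg.2 (not_le.1 c1).le) (sub_nonneg.2 c2)]
      have := nonneg_of_mul_nonneg_right k (by linarith)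
      linarith
    · refine le_trans ?_ (mul_le_mul_of_nonneg_left
        ((le_max_right _ _).trans (le_max_right _ _)) (by norm_num))
      have e : (8 / 7 : ℝ) * fPow a (1 / 2) = 4 / (7 * (2 * a + 1)) := by
        unfold fPow; field_simp; ring
      rw [e, fPow, div_le_div_iff₀ hax (by linarith)]
      have k : 0 ≤ (28 * (2 * a + 1)) * (7 * (2 * a + 1) * x ^ 2 - (14 * a + 3) * x + 4 * a) := by
        nlinarith [sq_nonneg (14 * (2 * a + 1) * x - (14 * a + 3)), not_le.1 c2]
      have := nonneg_of_mul_nonneg_right k (by linarith)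
      linarith
  · intro ε hε
    obtain ⟨t, ht, ht1, ht2⟩ : ∃ t : ℝ, 0 < t ∧ t ≤ ε / 4 ∧ t ≤ 1 / 5 :=
      ⟨min (ε / 4) (1 / 5), by positivity, min_le_left _ _, min_le_right _ _⟩
    have ha : 0 < t ^ 2 := by positivity
    refine ⟨t ^ 2, ha, by nlinarith, t, ⟨ht.le, by linarith⟩, ?_⟩
    have e : fPow (t ^ 2) t = (1 - t) / (1 + t) := by
      unfold fPow; field_simp; ring
    have hM : max (fPow (t ^ 2) (1 / 8)) (max (fPow (t ^ 2) (1 / 4)) (fPow (t ^ 2) (1 / 2)))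
        ≤ 7 / 8 := by
      unfold fPow
      refine max_le ?_ (max_le ?_ ?_) <;> rw [div_le_iff₀ (by linarith)] <;> linarith
    have hM0 : 0 ≤ max (fPow (t ^ 2) (1 / 8))
        (max (fPow (t ^ 2) (1 / 4)) (fPow (t ^ 2) (1 / 2))) := by
      refine le_trans ?_ (le_max_left _ _)
      unfold fPow
      exact div_nonneg (by norm_num) (by linarith)
    rw [e, lt_div_iff₀ (by linarith)]
    generalize max (fPow (t ^ 2) (1 / 8))
        (max (fPow (t ^ 2) (1 / 4)) (fPow (t ^ 2) (1 / 2))) = M at hM hM0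
    rcases le_total ε (8 / 7) with h | h
    · have h1 : (8 / 7 - ε) * M ≤ 1 - 7 / 8 * ε := by nlinarith
      have h2 : (8 / 7 - ε) * M * (1 + t) ≤ (1 - 7 / 8 * ε) * (1 + t) :=
        mul_le_mul_of_nonneg_right h1 (by linarith)
      nlinarith [mul_pos hε ht]
    · have h1 : (8 / 7 - ε) * M ≤ 0 := mul_nonpos_of_nonpos_of_nonneg (by linarith) hM0
      nlinarith
end
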